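/- arXiv:1512.09174 — 3 statements merged into one kernel-verified Lean document; each statement's English description precedes it below -/
import Mathlib

section
/- Let f satisfy (H) and be bounded above by M > 0, and let x be a solution on [-1,∞) of x'(t) = f(x(t-1)) whose initial segment φ belongs to K and is not identically zero. Then x is slowly oscillating on [0,∞): any two distinct zeros z, z' ≥ 0 of x satisfy |z - z'| > 1. -/
/-!
If a solution `x` has no zero in `(z - 1, z)`, then `x' (t) = f (x (t - 1)) ≠ 0` on `(z, z + 1)`, so
by Rolle's theorem a zero at `z` is the only one in `[z, z + 1]`: a gap before a zero forces a gap
after it. Call a nonnegative zero crowded if another one lies less than `1` before it. If two zeros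
are at distance at most `1`, the earlier one is crowded, so every crowded zero has a smaller crowded
zero close before it. Hence the infimum of the crowded zeros is a zero that is not crowded, and the
gap after it separates it from the crowded zeros of which it is the infimum.

The propagation also has to survive zeros in the initial interval. A zero `w ∈ [-1, 0]` comes
with `x = 0` on `[-1, w]`, so `x` keeps the value `x 0 ≠ 0` on `[0, w + 1]`, and no nonnegative zero
is within `1` of `w`.
-/

open Set Filter

/-- Hypotheses (H): `f` is continuous, satisfies the negative feedback condition,
and is differentiable on a neighborhood of `0` with `f'(0) < 0`. -/
def HypH (f : ℝ → ℝ) : Prop :=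
  Continuous f ∧ (∀ x : ℝ, x ≠ 0 → x * f x < 0) ∧
    (∀ᶠ y in nhds (0 : ℝ), DifferentiableAt ℝ f y) ∧ deriv f 0 < 0

/-- A solution on `[-1,∞)` of the delay equation `x'(t) = f (x (t-1))`. -/
def IsSolOn (f x : ℝ → ℝ) : Prop :=
  ContinuousOn x (Ici (-1)) ∧ ∀ t : ℝ, 0 < t → HasDerivAt x (f (x (t - 1))) t

/-- Membership in the set `K`: `φ(-1) = 0`, `φ` nondecreasing on `[-1,0]`,
continuous there, and `|φ| ≤ M`. -/
def MemK (M : ℝ) (φ : ℝ → ℝ) : Prop :=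
  ContinuousOn φ (Icc (-1) 0) ∧ φ (-1) = 0 ∧ MonotoneOn φ (Icc (-1) 0) ∧
    ∀ s ∈ Icc (-1 : ℝ) 0, |φ s| ≤ M

/-- `T` is the minimal (positive) period of `p`. -/
def MinPeriod {α : Type*} (p : ℝ → α) (T : ℝ) : Prop :=
  0 < T ∧ (∀ t, p (t + T) = p t) ∧
    ∀ T' : ℝ, 0 < T' → (∀ t, p (t + T') = p t) → T ≤ T'

/-- A slowly oscillating periodic (SOP) solution of `x'(t) = f (x (t-1))`:
a nonconstant periodic differentiable solution any two of whose distinct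
zeros are separated by more than `1`. -/
def IsSOP (f p : ℝ → ℝ) : Prop :=
  (∀ t : ℝ, HasDerivAt p (f (p (t - 1))) t) ∧
    (∃ T : ℝ, 0 < T ∧ ∀ t, p (t + T) = p t) ∧
    (∃ t s : ℝ, p t ≠ p s) ∧
    ∀ z z' : ℝ, p z = 0 → p z' = 0 → z ≠ z' → 1 < |z - z'|

/-- A Kaplan–Yorke solution: an SOP solution of minimal period `4`
satisfying `x(t) = -x(t-2)`. -/
def IsKY (f x : ℝ → ℝ) : Prop :=
  IsSOP f x ∧ MinPeriod x 4 ∧ ∀ t : ℝ, x t = -x (t - 2)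

/-- Hypotheses (H') with constants `μ, β, σ`. -/
def HypH' (f : ℝ → ℝ) (μ β σ : ℝ) : Prop :=
  (∀ x : ℝ, |f x| ≤ μ) ∧ ∀ x : ℝ, β ≤ |x| → σ ≤ |f x|

/-- Hypotheses (H'') with constants `a, c, δ, γ`. -/
def HypH'' (f : ℝ → ℝ) (a c δ γ : ℝ) : Prop :=
  (∀ x : ℝ, f (-x) = -f x) ∧ (∀ x ∈ Icc (0 : ℝ) (2 * a), |f x| ≤ γ) ∧
    (∀ x ∈ Icc a (2 * a - c), f x = -γ) ∧ ∀ x ∈ Icc (2 * a) γ, f x = -δ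

/-- The minimal period of `p` equals `z'' - z` for three consecutive zeros
`z < z' < z''` of `p`. -/
def PeriodThreeZeros (p : ℝ → ℝ) : Prop :=
  ∃ z z' z'' : ℝ, z < z' ∧ z' < z'' ∧ p z = 0 ∧ p z' = 0 ∧ p z'' = 0 ∧
    (∀ t, t ∈ Ioo z z' ∪ Ioo z' z'' → p t ≠ 0) ∧ MinPeriod p (z'' - z)

open scoped Topology

lemma disjoint_Ioo_of_gap_propagates {Z : Set ℝ} {d : ℝ} (hd : 0 < d) (hZ : IsClosed Z)
    (hbdd : BddBelow Z)
    (hgap : ∀ z ∈ Z, Disjoint (Ioo (z - d) z) Z → Disjoint (Ioc z (z + d)) Z) :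
    ∀ z ∈ Z, Disjoint (Ioo (z - d) z) Z := by
  by_contra! hcrowded
  set B : Set ℝ := {z ∈ Z | ¬ Disjoint (Ioo (z - d) z) Z}
  have hBZ : B ⊆ Z := sep_subset _ _
  have hBbdd : BddBelow B := hbdd.mono hBZ
  have descent : ∀ b ∈ B, ∃ a ∈ B, a < b := by
    rintro b ⟨hbZ, hb⟩
    obtain ⟨a, ha, haZ⟩ := not_disjoint_iff.1 hb
    refine ⟨a, ⟨haZ, fun hfree => ?_⟩, ha.2⟩
    exact disjoint_left.1 (hgap a haZ hfree) ⟨ha.2, (sub_lt_iff_lt_add.1 ha.1).le⟩ hbZ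
  have hmZ : sInf B ∈ Z := closure_minimal hBZ hZ (csInf_mem_closure hcrowded hBbdd)
  have hmB : sInf B ∉ B := fun hm =>
    let ⟨_, ha, ham⟩ := descent _ hm
    notMem_of_lt_csInf ham hBbdd ha
  have hfree : Disjoint (Ioo (sInf B - d) (sInf B)) Z := not_not.1 fun h => hmB ⟨hmZ, h⟩
  obtain ⟨b, hb, hbd⟩ := exists_lt_of_csInf_lt hcrowded (lt_add_of_pos_right (sInf B) hd)
  have hmb : sInf B < b := (csInf_le hBbdd hb).lt_of_ne fun h => hmB (h ▸ hb)
  exact disjoint_left.1 (hgap _ hmZ hfree) ⟨hmb, hbd.le⟩ (hBZ hb)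

lemma pairwise_lt_abs_sub_of_gap_propagates {Z : Set ℝ} {d : ℝ} (hd : 0 < d) (hZ : IsClosed Z)
    (hbdd : BddBelow Z)
    (hgap : ∀ z ∈ Z, Disjoint (Ioo (z - d) z) Z → Disjoint (Ioc z (z + d)) Z) :
    Z.Pairwise fun a b => d < |a - b| := by
  have hfree := disjoint_Ioo_of_gap_propagates hd hZ hbdd hgap
  have hlt : ∀ a ∈ Z, ∀ b ∈ Z, a < b → d < b - a := fun a ha b hb hab => by
    by_contra! hle
    exact disjoint_left.1 (hgap a ha (hfree a ha)) ⟨hab, sub_le_iff_le_add'.1 hle⟩ hb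
  intro a ha b hb hab
  rcases hab.lt_or_gt with h | h
  · exact (hlt a ha b hb h).trans_le (abs_sub_comm a b ▸ le_abs_self (b - a))
  · exact (hlt b hb a ha h).trans_le (le_abs_self (a - b))

lemma apply_zero_eq_zero_of_mul_nonpos {f : ℝ → ℝ} (hf : ContinuousAt f 0)
    (hneg : ∀ y, y * f y ≤ 0) : f 0 = 0 := by
  apply le_antisymm
  · exact le_of_tendsto (hf.mono_left nhdsWithin_le_nhds : Tendsto f (𝓝[>] 0) (𝓝 (f 0)))
      (eventually_mem_nhdsWithin.mono fun y hy => nonpos_of_mul_nonpos_right (hneg y) hy)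
  · exact ge_of_tendsto (hf.mono_left nhdsWithin_le_nhds : Tendsto f (𝓝[<] 0) (𝓝 (f 0)))
      (eventually_mem_nhdsWithin.mono fun y hy => nonneg_of_mul_nonpos_right (hneg y) hy)

lemma HypH.apply_eq_zero_iff {f : ℝ → ℝ} (hf : HypH f) (y : ℝ) : f y = 0 ↔ y = 0 := by
  obtain ⟨hcont, hneg, -, -⟩ := hf
  constructor
  · contrapose!
    exact fun hy => right_ne_zero_of_mul (hneg y hy).ne
  · rintro rfl
    refine apply_zero_eq_zero_of_mul_nonpos hcont.continuousAt fun y => ?_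
    rcases eq_or_ne y 0 with rfl | hy
    · rw [zero_mul]
    · exact (hneg y hy).le

namespace MemK

variable {M : ℝ} {φ : ℝ → ℝ}

lemma eq_zero_of_le (hφ : MemK M φ) {s w : ℝ} (hs : -1 ≤ s) (hsw : s ≤ w) (hw : w ≤ 0)
    (hφw : φ w = 0) : φ s = 0 := by
  obtain ⟨-, hleft, hmono, -⟩ := hφ
  have hs' : s ∈ Icc (-1) 0 := ⟨hs, hsw.trans hw⟩
  apply le_antisymm
  · exact hφw ▸ hmono hs' ⟨hs.trans hsw, hw⟩ hsw
  · exact hleft ▸ hmono (left_mem_Icc.2 (by norm_num)) hs' hs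

lemma apply_zero_ne_zero (hφ : MemK M φ) (hne : ∃ s ∈ Icc (-1 : ℝ) 0, φ s ≠ 0) : φ 0 ≠ 0 :=
  let ⟨_, hs, hφs⟩ := hne
  fun h0 => hφs (hφ.eq_zero_of_le hs.1 hs.2 le_rfl h0)

end MemK

namespace IsSolOn

variable {f x : ℝ → ℝ} {a b w z : ℝ}

lemma continuousOn_Ici_zero (hx : IsSolOn f x) : ContinuousOn x (Ici 0) :=
  hx.1.mono (Ici_subset_Ici.2 (by norm_num))

lemma exists_eq_slope (hx : IsSolOn f x) (ha : 0 ≤ a) (hab : a < b) :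
    ∃ s ∈ Ioo (a - 1) (b - 1), f (x s) = (x b - x a) / (b - a) := by
  obtain ⟨c, hc, hslope⟩ := exists_hasDerivAt_eq_slope x (fun t => f (x (t - 1))) hab
    (hx.continuousOn_Ici_zero.mono fun _ ht => ha.trans ht.1)
    fun t ht => hx.2 t (ha.trans_lt ht.1)
  exact ⟨c - 1, ⟨sub_lt_sub_right hc.1 1, sub_lt_sub_right hc.2 1⟩, hslope⟩

lemma apply_ne_of_forall_ne_zero (hx : IsSolOn f x) (hf : ∀ y, f y = 0 → y = 0) (ha : 0 ≤ a)
    (hab : a < b) (hdelay : ∀ s ∈ Ioo (a - 1) (b - 1), x s ≠ 0) : x b ≠ x a := by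
  intro heq
  obtain ⟨s, hs, hslope⟩ := hx.exists_eq_slope ha hab
  rw [heq, sub_self, zero_div] at hslope
  exact hdelay s hs (hf _ hslope)

lemma apply_eq_of_forall_eq_zero (hx : IsSolOn f x) (hf : f 0 = 0) (ha : 0 ≤ a) (hab : a ≤ b)
    (hdelay : ∀ s ∈ Ioo (a - 1) (b - 1), x s = 0) : x b = x a := by
  rcases hab.eq_or_lt with rfl | hab
  · rfl
  obtain ⟨s, hs, hslope⟩ := hx.exists_eq_slope ha hab
  rw [hdelay s hs, hf, eq_comm, div_eq_zero_iff] at hslope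
  exact sub_eq_zero.1 (hslope.resolve_right (sub_pos.2 hab).ne')

lemma isClosed_nonneg_zeros (hx : IsSolOn f x) : IsClosed {t | 0 ≤ t ∧ x t = 0} :=
  hx.continuousOn_Ici_zero.preimage_isClosed_of_isClosed isClosed_Ici isClosed_singleton

lemma add_one_lt_of_forall_eq_zero (hx : IsSolOn f x) (hf : f 0 = 0) (h0 : x 0 ≠ 0)
    (hw : ∀ s ∈ Icc (-1) w, x s = 0) (hz : 0 ≤ z) (hxz : x z = 0) : w + 1 < z := by
  by_contra! hle
  refine h0 (hxz ▸ (hx.apply_eq_of_forall_eq_zero hf le_rfl hz fun s hs => hw s ?_).symm)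
  constructor <;> linarith [hs.1, hs.2]

lemma ne_zero_of_mem_Ioc (hx : IsSolOn f x) (hf : ∀ y, f y = 0 → y = 0) (hz : 0 ≤ z)
    (hxz : x z = 0) (hgap : ∀ s ∈ Ioo (z - 1) z, x s ≠ 0) : ∀ t ∈ Ioc z (z + 1), x t ≠ 0 :=
  fun _ ht => hxz ▸ hx.apply_ne_of_forall_ne_zero hf hz ht.1 fun s hs =>
    hgap s ⟨hs.1, hs.2.trans_le (sub_le_iff_le_add.2 ht.2)⟩

lemma ne_zero_of_disjoint_Ioo (hx : IsSolOn f x) (hf : f 0 = 0) (h0 : x 0 ≠ 0)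
    (hinit : ∀ w ∈ Icc (-1 : ℝ) 0, x w = 0 → ∀ s ∈ Icc (-1) w, x s = 0) (hz : 0 ≤ z)
    (hxz : x z = 0) (hgap : Disjoint (Ioo (z - 1) z) {t | 0 ≤ t ∧ x t = 0}) :
    ∀ s ∈ Ioo (z - 1) z, x s ≠ 0 := by
  intro s hs hxs
  rcases le_total 0 s with hs0 | hs0
  · exact disjoint_left.1 hgap hs ⟨hs0, hxs⟩
  · have hvanish := hinit s ⟨by linarith [hs.1], hs0⟩ hxs
    linarith [hs.1, hx.add_one_lt_of_forall_eq_zero hf h0 hvanish hz hxz]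

end IsSolOn

theorem statement_0_general (f x : ℝ → ℝ) (hf : ∀ y, f y = 0 ↔ y = 0) (hx : IsSolOn f x)
    (hinit : ∀ w ∈ Icc (-1 : ℝ) 0, x w = 0 → ∀ s ∈ Icc (-1) w, x s = 0) (h0 : x 0 ≠ 0) :
    ∀ z z' : ℝ, 0 ≤ z → 0 ≤ z' → x z = 0 → x z' = 0 → z ≠ z' → 1 < |z - z'| := by
  have separated : {t | 0 ≤ t ∧ x t = 0}.Pairwise fun a b => 1 < |a - b| := by
    refine pairwise_lt_abs_sub_of_gap_propagates one_pos hx.isClosed_nonneg_zeros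
      ⟨0, fun _ ht => ht.1⟩ fun z ⟨hz, hxz⟩ hgap => disjoint_left.2 fun t ht ⟨_, hxt⟩ => ?_
    have hbefore := hx.ne_zero_of_disjoint_Ioo ((hf 0).2 rfl) h0 hinit hz hxz hgap
    exact hx.ne_zero_of_mem_Ioc (fun y => (hf y).1) hz hxz hbefore t ht hxt
  exact fun z z' hz hz' hxz hxz' => separated ⟨hz, hxz⟩ ⟨hz', hxz'⟩

theorem statement_0 (f : ℝ → ℝ) (M : ℝ) (hM : 0 < M)
    (hH : HypH f) (hbd : ∀ y : ℝ, f y ≤ M)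
    (x : ℝ → ℝ) (hx : IsSolOn f x) (hK : MemK M x)
    (hne : ∃ s ∈ Icc (-1 : ℝ) 0, x s ≠ 0) :
    ∀ z z' : ℝ, 0 ≤ z → 0 ≤ z' → x z = 0 → x z' = 0 → z ≠ z' →
      1 < |z - z'| :=
  statement_0_general f x hH.apply_eq_zero_iff hx
    (fun _ hw hxw _ hs => hK.eq_zero_of_le hs.1 hs.2 hw.2 hxw) (hK.apply_zero_ne_zero hne)
end

section
/- Let f satisfy (H) and be bounded above by M > 0, and let x be a solution on [-1,∞) of x'(t) = f(x(t-1)) whose initial segment φ belongs to K and is not identically zero. If z > 0 is a zero of x, then setting B := sup{|f(ξ)| : ξ ∈ x([z-1,z])}, one has |x(t)| ≤ B for all t ∈ [z, z+1], |x'(t)| ≤ B for all t ∈ (z, z+1), and the function s ↦ |x(z+1+s)| is monotone nondecreasing on [-1,0]. -/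
/-!
Negative feedback makes `x` monotone (increasing or decreasing) on `[z, w]` as soon as it has a
constant weak sign on `[z - 1, w - 1]`. It therefore suffices to show that `x` has a constant weak
sign on `[z - 1, z]` for every zero `z ≥ 0`: then `|x|` increases from `0` on `[z, z + 1]`, and the
bounds by `B` come from the equation and the mean value theorem.

This sign property passes from a zero `z` to any zero `w ∈ [z, z + 1]`, because `x` is monotone on
`[z, w]` and hence vanishes there. Let `c` be the infimum of the zeros violating it; `c` is itself
a zero. If some zero precedes `c` within distance `1`, that zero has the property, hence so does
`c`. Otherwise the intermediate value theorem, combined with the sign of the initial segment when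
`c < 1`, gives the property at `c`. It then passes from `c` to all zeros in `[c, c + 1]`, so the
infimum cannot be `c`.
-/

open Set Filter

section ConstSignOn

/-- `x` does not change sign on `s`. The sign is weak: zeros in `s` are allowed. -/
def ConstSignOn {α β : Type*} [Zero β] [LE β] (x : α → β) (s : Set α) : Prop :=
  (∀ t ∈ s, 0 ≤ x t) ∨ ∀ t ∈ s, x t ≤ 0

variable {α β : Type*} {x : α → β} {s u : Set α}

lemma ConstSignOn.mono [Zero β] [LE β] (h : ConstSignOn x s) (hus : u ⊆ s) : ConstSignOn x u :=
  h.imp (fun h t ht => h t (hus ht)) fun h t ht => h t (hus ht)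

lemma ConstSignOn.union_of_eqOn_zero [Zero β] [Preorder β] (h : ConstSignOn x s)
    (hu : EqOn x 0 u) : ConstSignOn x (s ∪ u) :=
  h.imp (fun h t ht => ht.elim (h t) fun ht => (hu ht).ge)
    fun h t ht => ht.elim (h t) fun ht => (hu ht).le

lemma ConstSignOn.union_of_ne_zero [Zero β] [PartialOrder β] (hs : ConstSignOn x s)
    (hu : ConstSignOn x u) {b : α} (hbs : b ∈ s) (hbu : b ∈ u) (hb : x b ≠ 0) :
    ConstSignOn x (s ∪ u) := by
  rcases hs with hs | hs <;> rcases hu with hu | hu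
  · exact .inl fun t ht => ht.elim (hs t) (hu t)
  · exact absurd ((hu b hbu).antisymm (hs b hbs)) hb
  · exact absurd ((hs b hbs).antisymm (hu b hbu)) hb
  · exact .inr fun t ht => ht.elim (hs t) (hu t)

lemma constSignOn_of_forall_ne_zero [TopologicalSpace α] [Zero β] [LinearOrder β]
    [TopologicalSpace β] [OrderClosedTopology β] (hs : IsPreconnected s) (hx : ContinuousOn x s)
    (hne : ∀ t ∈ s, x t ≠ 0) : ConstSignOn x s := by
  rw [ConstSignOn]
  by_contra! hsign
  obtain ⟨⟨p, hp, hxp⟩, q, hq, hxq⟩ := hsign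
  obtain ⟨r, hr, hxr⟩ := hs.intermediate_value hp hq hx ⟨hxp.le, hxq.le⟩
  exact hne r hr hxr

end ConstSignOn

section MonotoneOrAntitone

variable {α β : Type*} [Preorder α] {x : α → β} {a b : α}

lemma eqOn_const_of_monotoneOn_or_antitoneOn [PartialOrder β]
    (h : MonotoneOn x (Icc a b) ∨ AntitoneOn x (Icc a b)) (hab : a ≤ b) {y : β} (ha : x a = y)
    (hb : x b = y) : EqOn x (fun _ => y) (Icc a b) := by
  intro t ht
  have ha_mem := left_mem_Icc.2 hab
  have hb_mem := right_mem_Icc.2 hab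
  rcases h with h | h
  · exact ((h ht hb_mem ht.2).trans_eq hb).antisymm (ha.ge.trans (h ha_mem ht ht.1))
  · exact ((h ha_mem ht ht.1).trans_eq ha).antisymm (hb.ge.trans (h ht hb_mem ht.2))

lemma monotoneOn_abs_of_monotoneOn_or_antitoneOn [AddCommGroup β] [LinearOrder β]
    [IsOrderedAddMonoid β] (h : MonotoneOn x (Icc a b) ∨ AntitoneOn x (Icc a b)) (ha : x a = 0) :
    MonotoneOn (fun t => |x t|) (Icc a b) := by
  intro s hs t ht hst
  have ha_mem : a ∈ Icc a b := left_mem_Icc.2 (hs.1.trans hs.2)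
  rcases h with h | h
  · exact abs_le_abs_of_nonneg (ha.ge.trans (h ha_mem hs hs.1)) (h hs ht hst)
  · exact abs_le_abs_of_nonpos ((h ha_mem hs hs.1).trans_eq ha) (h hs ht hst)

end MonotoneOrAntitone

lemma constSignOn_Icc_of_forall_Ico_ne_zero {x : ℝ → ℝ} {a c : ℝ} (hac : a ≤ c)
    (hx : ContinuousOn x (Ico a c)) (hxc : x c = 0) (hne : ∀ t ∈ Ico a c, x t ≠ 0) :
    ConstSignOn x (Icc a c) := by
  rw [← Ico_union_right hac]
  exact (constSignOn_of_forall_ne_zero isPreconnected_Ico hx hne).union_of_eqOn_zero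
    (eqOn_singleton.2 hxc)

lemma constSignOn_of_zero_of_forall_ne_zero {x : ℝ → ℝ} (hx : ContinuousOn x (Ici 0))
    (hinit : ConstSignOn x (Icc (-1) 0)) {c : ℝ} (hc : 0 ≤ c) (hxc : x c = 0)
    (hne : ∀ t ∈ Ico (c - 1) c, 0 ≤ t → x t ≠ 0) : ConstSignOn x (Icc (c - 1) c) := by
  have hsign : ∀ a ∈ Icc (c - 1) c, 0 ≤ a → ConstSignOn x (Icc a c) := fun a ha ha0 =>
    constSignOn_Icc_of_forall_Ico_ne_zero ha.2 (hx.mono fun t ht => ha0.trans ht.1) hxc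
      fun t ht => hne t ⟨ha.1.trans ht.1, ht.2⟩ (ha0.trans ht.1)
  rcases le_total 1 c with h1c | hc1
  · exact hsign (c - 1) ⟨le_rfl, by linarith⟩ (sub_nonneg.2 h1c)
  rcases hc.eq_or_lt with rfl | hc
  · simpa using hinit
  have h0 : (0 : ℝ) ∈ Ico (c - 1) c := ⟨sub_nonpos.2 hc1, hc⟩
  rw [← Icc_union_Icc_eq_Icc h0.1 hc.le]
  exact (hinit.mono (Icc_subset_Icc_left (by linarith))).union_of_ne_zero
    (hsign 0 ⟨h0.1, hc.le⟩ le_rfl) (right_mem_Icc.2 h0.1) (left_mem_Icc.2 hc.le)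
    (hne 0 h0 le_rfl)

lemma abs_comp_le_sSup {α β : Type*} [TopologicalSpace α] [TopologicalSpace β] {f : β → ℝ}
    {x : α → β} {s : Set α} (hf : Continuous f) (hs : IsCompact s) (hx : ContinuousOn x s) {t : α}
    (ht : t ∈ s) :
    |f (x t)| ≤ sSup ((fun ξ => |f ξ|) '' (x '' s)) :=
  le_csSup ((hs.image_of_continuousOn hx).bddAbove_image hf.abs.continuousOn)
    (mem_image_of_mem _ (mem_image_of_mem x ht))

/-- Weak negative feedback: `y * f y ≤ 0` for all `y`, and `f 0 = 0`, written as two one-sided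
conditions that meet at `0`. -/
def WeakNegFeedback (f : ℝ → ℝ) : Prop :=
  (∀ y, 0 ≤ y → f y ≤ 0) ∧ ∀ y ≤ 0, 0 ≤ f y

lemma weakNegFeedback_of_continuous {f : ℝ → ℝ} (hf : Continuous f)
    (hfeed : ∀ y ≠ 0, y * f y ≤ 0) : WeakNegFeedback f := by
  have hpos : ∀ y ∈ Ioi (0 : ℝ), f y ≤ 0 := fun y (hy : 0 < y) =>
    nonpos_of_mul_nonpos_right (hfeed y hy.ne') hy
  have hneg : ∀ y ∈ Iio (0 : ℝ), 0 ≤ f y := fun y (hy : y < 0) =>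
    nonneg_of_mul_nonpos_right (hfeed y hy.ne) hy
  constructor
  · exact fun y hy => le_on_closure hpos hf.continuousOn continuousOn_const (by simpa using hy)
  · exact fun y hy => le_on_closure hneg continuousOn_const hf.continuousOn (by simpa using hy)

lemma HypH.weakNegFeedback {f : ℝ → ℝ} (hH : HypH f) : WeakNegFeedback f :=
  weakNegFeedback_of_continuous hH.1 fun y hy => (hH.2.1 y hy).le

lemma MemK.constSignOn {M : ℝ} {φ : ℝ → ℝ} (hφ : MemK M φ) : ConstSignOn φ (Icc (-1) 0) := by
  obtain ⟨-, hφ_left, hφ_mono, -⟩ := hφ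
  exact .inl fun t ht => hφ_left.ge.trans (hφ_mono (by simp) ht ht.1)

namespace IsSolOn

variable {f x : ℝ → ℝ}

lemma continuousOn_Icc (hx : IsSolOn f x) {a b : ℝ} (ha : -1 ≤ a) : ContinuousOn x (Icc a b) :=
  hx.1.mono fun _ hs => ha.trans hs.1

lemma abs_sub_le (hx : IsSolOn f x) {a t B : ℝ} (ha : 0 ≤ a) (hat : a ≤ t)
    (hB : ∀ s ∈ Ioo a t, |f (x (s - 1))| ≤ B) : |x t - x a| ≤ B * (t - a) := by
  rcases hat.eq_or_lt with rfl | hat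
  · simp
  obtain ⟨s, hs, hslope⟩ := exists_hasDerivAt_eq_slope x (fun s => f (x (s - 1))) hat
    (hx.continuousOn_Icc (by linarith)) fun s hs => hx.2 s (ha.trans_lt hs.1)
  have hincrement : x t - x a = f (x (s - 1)) * (t - a) :=
    ((eq_div_iff (sub_pos.2 hat).ne').1 hslope).symm
  rw [hincrement, abs_mul, abs_of_pos (sub_pos.2 hat)]
  exact mul_le_mul_of_nonneg_right (hB s hs) (sub_pos.2 hat).le

lemma monotoneOn_or_antitoneOn (hx : IsSolOn f x) (hf : WeakNegFeedback f) {a b : ℝ} (ha : 0 ≤ a)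
    (hsign : ConstSignOn x (Icc (a - 1) (b - 1))) :
    MonotoneOn x (Icc a b) ∨ AntitoneOn x (Icc a b) := by
  have hcont : ContinuousOn x (Icc a b) := hx.continuousOn_Icc (by linarith)
  have hderiv : ∀ t ∈ interior (Icc a b),
      HasDerivWithinAt x (f (x (t - 1))) (interior (Icc a b)) t := fun t ht =>
    (hx.2 t (ha.trans_lt (interior_Icc.subset ht).1)).hasDerivWithinAt
  have hdelay : ∀ t ∈ interior (Icc a b), t - 1 ∈ Icc (a - 1) (b - 1) := fun t ht =>
    have ht := interior_subset ht
    ⟨sub_le_sub_right ht.1 1, sub_le_sub_right ht.2 1⟩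
  rcases hsign with hsign | hsign
  · exact .inr <| antitoneOn_of_hasDerivWithinAt_nonpos (convex_Icc a b) hcont hderiv
      fun t ht => hf.1 _ (hsign _ (hdelay t ht))
  · exact .inl <| monotoneOn_of_hasDerivWithinAt_nonneg (convex_Icc a b) hcont hderiv
      fun t ht => hf.2 _ (hsign _ (hdelay t ht))

lemma constSignOn_of_zero_of_zero (hx : IsSolOn f x) (hf : WeakNegFeedback f) {z w : ℝ}
    (hz : 0 ≤ z) (hw : w ∈ Icc z (z + 1)) (hxz : x z = 0) (hxw : x w = 0)
    (hsign : ConstSignOn x (Icc (z - 1) z)) : ConstSignOn x (Icc (w - 1) w) := by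
  have hwz : w - 1 ≤ z := sub_le_iff_le_add.2 hw.2
  have hmono : MonotoneOn x (Icc z w) ∨ AntitoneOn x (Icc z w) :=
    hx.monotoneOn_or_antitoneOn hf hz (hsign.mono (Icc_subset_Icc_right hwz))
  have hvanish : EqOn x 0 (Icc z w) := eqOn_const_of_monotoneOn_or_antitoneOn hmono hw.1 hxz hxw
  rw [← Icc_union_Icc_eq_Icc hwz hw.1]
  exact (hsign.mono (Icc_subset_Icc_left (sub_le_sub_right hw.1 1))).union_of_eqOn_zero hvanish

theorem constSignOn_of_zero (hx : IsSolOn f x) (hf : WeakNegFeedback f)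
    (hinit : ConstSignOn x (Icc (-1) 0)) {z : ℝ} (hz : 0 ≤ z) (hxz : x z = 0) :
    ConstSignOn x (Icc (z - 1) z) := by
  by_contra hbad
  have hcont : ContinuousOn x (Ici 0) := hx.1.mono (Ici_subset_Ici.2 (by norm_num))
  have hclosed : IsClosed {t | 0 ≤ t ∧ x t = 0} :=
    hcont.preimage_isClosed_of_isClosed isClosed_Ici isClosed_singleton
  let S : Set ℝ := {w | (0 ≤ w ∧ x w = 0) ∧ ¬ConstSignOn x (Icc (w - 1) w)}
  have hS : S.Nonempty := ⟨z, ⟨hz, hxz⟩, hbad⟩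
  have hS_bdd : BddBelow S := ⟨0, fun w hw => hw.1.1⟩
  obtain ⟨hc, hxc⟩ : 0 ≤ sInf S ∧ x (sInf S) = 0 :=
    closure_minimal (fun w hw => hw.1) hclosed (csInf_mem_closure hS hS_bdd)
  set c := sInf S
  have hc_sign : ConstSignOn x (Icc (c - 1) c) := by
    by_contra hc_bad
    refine hc_bad <| constSignOn_of_zero_of_forall_ne_zero hcont hinit hc hxc
      fun t ht ht0 hxt => hc_bad ?_
    have ht_sign : ConstSignOn x (Icc (t - 1) t) := by
      by_contra ht_bad
      exact notMem_of_lt_csInf ht.2 hS_bdd ⟨⟨ht0, hxt⟩, ht_bad⟩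
    exact hx.constSignOn_of_zero_of_zero hf ht0 ⟨ht.2.le, sub_le_iff_le_add.1 ht.1⟩ hxt hxc ht_sign
  obtain ⟨w, hwS, hwc⟩ : ∃ w ∈ S, w < c + 1 := exists_lt_of_csInf_lt hS (lt_add_one c)
  exact hwS.2 (hx.constSignOn_of_zero_of_zero hf hc ⟨csInf_le hS_bdd hwS, hwc.le⟩ hxc hwS.1.2
    hc_sign)

end IsSolOn

theorem statement_1_general {f x : ℝ → ℝ} (hf : Continuous f) (hfeed : WeakNegFeedback f)
    (hx : IsSolOn f x) (hinit : ConstSignOn x (Icc (-1) 0)) {z : ℝ} (hz : 0 ≤ z) (hxz : x z = 0)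
    {B : ℝ} (hB : B = sSup ((fun ξ => |f ξ|) '' (x '' Icc (z - 1) z))) :
    (∀ t ∈ Icc z (z + 1), |x t| ≤ B) ∧
    (∀ t ∈ Ioo z (z + 1), |deriv x t| ≤ B) ∧
    MonotoneOn (fun s => |x (z + 1 + s)|) (Icc (-1 : ℝ) 0) := by
  have hfB : ∀ t ∈ Icc z (z + 1), |f (x (t - 1))| ≤ B := fun t ht =>
    hB ▸ abs_comp_le_sSup hf isCompact_Icc (hx.continuousOn_Icc (by linarith))
      ⟨sub_le_sub_right ht.1 1, sub_le_iff_le_add.2 ht.2⟩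
  have hB0 : 0 ≤ B := (abs_nonneg _).trans (hfB z (left_mem_Icc.2 (by linarith)))
  refine ⟨fun t ht => ?_, fun t ht => ?_, ?_⟩
  · calc |x t| = |x t - x z| := by rw [hxz, sub_zero]
      _ ≤ B * (t - z) :=
        hx.abs_sub_le hz ht.1 fun s hs => hfB s ⟨hs.1.le, hs.2.le.trans ht.2⟩
      _ ≤ B := mul_le_of_le_one_right hB0 (sub_le_iff_le_add'.2 ht.2)
  · rw [(hx.2 t (hz.trans_lt ht.1)).deriv]
    exact hfB t (Ioo_subset_Icc_self ht)
  · have hsign : ConstSignOn x (Icc (z - 1) (z + 1 - 1)) := by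
      simpa only [add_sub_cancel_right] using hx.constSignOn_of_zero hfeed hinit hz hxz
    exact (monotoneOn_abs_of_monotoneOn_or_antitoneOn
      (hx.monotoneOn_or_antitoneOn hfeed hz hsign) hxz).comp
      (fun s _ t _ hst => by gcongr) fun s hs => ⟨by linarith [hs.1], by linarith [hs.2]⟩

theorem statement_1 (f : ℝ → ℝ) (M : ℝ) (hM : 0 < M)
    (hH : HypH f) (hbd : ∀ y : ℝ, f y ≤ M)
    (x : ℝ → ℝ) (hx : IsSolOn f x) (hK : MemK M x)
    (hne : ∃ s ∈ Icc (-1 : ℝ) 0, x s ≠ 0)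
    (z : ℝ) (hz : 0 < z) (hxz : x z = 0)
    (B : ℝ) (hB : B = sSup ((fun ξ => |f ξ|) '' (x '' Icc (z - 1) z))) :
    (∀ t ∈ Icc z (z + 1), |x t| ≤ B) ∧
    (∀ t ∈ Ioo z (z + 1), |deriv x t| ≤ B) ∧
    MonotoneOn (fun s => |x (z + 1 + s)|) (Icc (-1 : ℝ) 0) := by
  exact statement_1_general hH.1 hH.weakNegFeedback hx hK.constSignOn hz.le hxz hB
end

section
/- Suppose f satisfies (H), is bounded above by M > 0, and f'(0) < -π/2. Then the equation x'(t) = f(x(t-1)) has an SOP solution; moreover this SOP solution p can be chosen so that p(-1) = 0, p is nondecreasing on [-1,0], p has exactly two zeros z₁ < z₂ in (0, z₂], and p(t + z₂ + 1) = p(t) for all t ∈ ℝ, with z₂ + 1 the minimal period of p. -/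
/-!
A solution whose history `φ` on `[-1, 0]` is nondecreasing, with `φ (-1) = 0` and `φ 0 > 0`,
decreases through a zero `z`, and minus its segment on `[z, z + 1]` is again such a history, now for
the equation with `f` replaced by `u ↦ -f (-u)`. This defines two half-return maps (`halfReturn`),
one for `u ↦ -f u` and one for `u ↦ f (-u)`, both restricted to `u ≥ 0`; a fixed point of their
composition `H` is the initial segment of the required periodic solution, whose zeros per period are
exactly the two crossings. The upper bound `M` bounds the positive half-waves, and then
`C = max (-f)` over `[0, M]` bounds the negative ones, so `f` may be cut off.

The difficulty is that the zero function is also fixed by `H`. As `H φ` is Lipschitz and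
`exists_le_halfReturn_zero` keeps `H φ 0` away from zero when `φ 0 ≥ ε`, the map `φ ↦ k φ • H φ`
with `k φ = max 1 (ε / H φ 0)` (`rescale`) is a continuous self-map of the compact convex set of
Lipschitz nondecreasing histories with `φ 0 ≥ ε`, and Schauder's theorem gives `φ = k φ • H φ`. If
`k φ > 1`, then `φ 0 = ε` is small. As `-f'(0) = α > π / 2`, the equation `l + α e^{-l} = 0` has a
root with `re l > 0` and `0 < im l < π` (`exists_characteristic_root`). The modulus `L` of the
associated linear functional is comparable to `φ 0` on images of half-return maps, since `im l < π`
prevents cancellation (`cos_half_im_mul_halfReturn_zero_le`), and along each half-turn it grows by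
nearly a factor `e^{re l}` (`exp_mul_sub_le_norm_charFunctional_halfReturn`). So
`L φ < L (H φ) ≤ k φ * L (H φ) = L φ`, a contradiction; thus `k φ = 1`.

Schauder's theorem is deduced from Brouwer's theorem, which is proved by the analytic argument of
Milnor and Rogers (`not_contDiffOn_retraction_sphere`).
-/

open Set Filter

/-! ### Brouwer's fixed point theorem -/

section Brouwer

open MeasureTheory Metric

section Det

variable {E : Type*} [NormedAddCommGroup E] [NormedSpace ℝ E] [FiniteDimensional ℝ E]

theorem exists_polynomial_eval_eq_det_one_add_smul (A : E →L[ℝ] E) :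
    ∃ q : Polynomial ℝ, q.natDegree ≤ Module.finrank ℝ E ∧
      ∀ t : ℝ, q.eval t = (1 + t • A).det := by
  let b := Module.finBasis ℝ E
  let m := LinearMap.toMatrix b b (A : E →ₗ[ℝ] E)
  refine ⟨(-m).charpolyRev, ?_, fun t => ?_⟩
  · rw [← Matrix.reverse_charpoly]
    exact (Polynomial.reverse_natDegree_le _).trans_eq (by simp [Matrix.charpoly_natDegree_eq_dim])
  · have eval_eq : (-m).charpolyRev.eval t = (1 + t • m).det := by
      rw [Matrix.charpolyRev, ← Polynomial.coe_evalRingHom, RingHom.map_det]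
      congr 1
      ext i j
      rcases eq_or_ne i j with rfl | hij
      · simp [mul_comm t]
      · simp [Matrix.one_apply_ne hij, mul_comm t]
    have toMatrix_eq :
        1 + t • m = LinearMap.toMatrix b b ((1 + t • A : E →L[ℝ] E) : E →ₗ[ℝ] E) := by
      rw [ContinuousLinearMap.toLinearMap_add, ContinuousLinearMap.toLinearMap_smul, map_add,
        map_smul, ContinuousLinearMap.toLinearMap_one, LinearMap.toMatrix_one]
    rw [eval_eq, toMatrix_eq, LinearMap.det_toMatrix]

theorem det_one_add_ne_zero_of_norm_lt_one {A : E →L[ℝ] E} (hA : ‖A‖ < 1) : (1 + A).det ≠ 0 := by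
  have : CompleteSpace E := FiniteDimensional.complete ℝ E
  have isUnit_one_add : IsUnit (1 + A) := by
    simpa using isUnit_one_sub_of_norm_lt_one (x := -A) (by rwa [norm_neg])
  exact ((isUnit_one_add.map ContinuousLinearMap.toLinearMapRingHom).map LinearMap.det).ne_zero

theorem det_one_add_pos_of_norm_lt_one {A : E →L[ℝ] E} (hA : ‖A‖ < 1) : 0 < (1 + A).det := by
  have det_continuous : Continuous fun B : E →L[ℝ] E => (1 + B).det :=
    ContinuousLinearMap.continuous_det.comp (by fun_prop)
  by_contra! hneg
  have det_zero : (1 + (0 : E →L[ℝ] E)).det = 1 := by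
    simp [ContinuousLinearMap.det]
  obtain ⟨B, hB, hdet⟩ := (convex_ball (0 : E →L[ℝ] E) 1).isPreconnected.intermediate_value
    (mem_ball_zero_iff.2 hA) (mem_ball_self one_pos) det_continuous.continuousOn
    ⟨hneg, by rw [det_zero]; exact zero_le_one⟩
  exact det_one_add_ne_zero_of_norm_lt_one (mem_ball_zero_iff.1 hB) hdet

/-- The integral is a polynomial in `t`, so Lagrange interpolation at nodes in `(0, ε)` recovers
its value at `t = 1`. -/
theorem integral_det_one_add_eq_of_forall_smul {X : Type*} [MeasurableSpace X] {μ : Measure X}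
    {A : X → E →L[ℝ] E} {c ε : ℝ} (hε : 0 < ε)
    (hint : ∀ t ∈ Ioo 0 ε, Integrable (fun x => (1 + t • A x).det) μ)
    (hc : ∀ t ∈ Ioo 0 ε, ∫ x, (1 + t • A x).det ∂μ = c) :
    ∫ x, (1 + A x).det ∂μ = c := by
  obtain ⟨s, hs, hcard⟩ := (Ioo_infinite hε).exists_subset_card_eq (Module.finrank ℝ E + 1)
  have hinj : InjOn (id : ℝ → ℝ) s := injOn_id _
  have interpolate_det : ∀ x, (1 + A x).det =
      ∑ t ∈ s, (1 + t • A x).det * (Lagrange.basis s id t).eval 1 := by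
    intro x
    obtain ⟨q, hdeg, hq⟩ := exists_polynomial_eval_eq_det_one_add_smul (A x)
    have degree_lt : q.degree < s.card := by
      rw [hcard]
      exact Polynomial.degree_le_natDegree.trans_lt (mod_cast Nat.lt_succ_of_le hdeg)
    have := congrArg (Polynomial.eval 1) (Lagrange.eq_interpolate hinj degree_lt)
    simpa [Lagrange.interpolate_apply, Polynomial.eval_finsetSum, hq] using this
  calc ∫ x, (1 + A x).det ∂μ
      = ∑ t ∈ s, (∫ x, (1 + t • A x).det ∂μ) * (Lagrange.basis s id t).eval 1 := by
        simp_rw [interpolate_det]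
        rw [integral_finsetSum _ fun t ht => (hint t (hs ht)).mul_const _]
        simp_rw [integral_mul_const]
    _ = c * (∑ t ∈ s, Lagrange.basis s id t).eval 1 := by
        rw [Polynomial.eval_finsetSum, Finset.mul_sum]
        exact Finset.sum_congr rfl fun t ht => by rw [hc t (hs ht)]
    _ = c := by
        rw [Lagrange.sum_basis hinj (Finset.card_pos.1 (by omega)), Polynomial.eval_one, mul_one]

end Det

section Perturbation

theorem bijective_id_add_of_lipschitzWith {E : Type*} [NormedAddCommGroup E] [CompleteSpace E]
    {g : E → E} {K : NNReal} (hK : K < 1) (hg : LipschitzWith K g) :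
    Function.Bijective fun x => x + g x := by
  have contracting : ∀ y, ContractingWith K fun x => y - g x := fun y =>
    ⟨hK, LipschitzWith.of_dist_le_mul fun a b => by
      simpa only [dist_sub_left] using hg.dist_le_mul a b⟩
  constructor
  · intro x x' h
    exact (contracting (x + g x)).fixedPoint_unique' (add_sub_cancel_right x _)
      (sub_eq_of_eq_add h)
  · intro y
    have := (contracting y).fixedPoint_isFixedPt
    exact ⟨_, (sub_eq_iff_eq_add.1 this).symm⟩

variable {E : Type*} [NormedAddCommGroup E] [NormedSpace ℝ E] {s : Set E} {g : E → E} {K : NNReal}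

theorem exists_mem_segment_mem_frontier {x y : E} (hx : x ∈ s) (hy : y ∉ s) :
    ∃ z ∈ segment ℝ x y, z ∈ frontier s := by
  by_contra! h
  have segment_subset : segment ℝ x y ⊆ interior s ∪ (closure s)ᶜ := fun z hz => by
    by_contra hz'
    rw [mem_union, not_or, notMem_compl_iff] at hz'
    exact h z hz hz'.symm
  have x_mem : x ∈ interior s :=
    (segment_subset (left_mem_segment ℝ x y)).resolve_right fun h => h (subset_closure hx)
  have disjoint : Disjoint (interior s) (closure s)ᶜ :=
    disjoint_compl_right.mono_left interior_subset_closure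
  exact hy <| interior_subset <| (convex_segment x y).isPreconnected.subset_left_of_subset_union
    isOpen_interior isClosed_closure.isOpen_compl disjoint segment_subset
    ⟨x, left_mem_segment ℝ x y, x_mem⟩ (right_mem_segment ℝ x y)

theorem lipschitzWith_indicator (hs : IsClosed s) (hg : LipschitzOnWith K g s)
    (hfr : ∀ x ∈ frontier s, g x = 0) : LipschitzWith K (s.indicator g) := by
  have crossing : ∀ x ∈ s, ∀ y ∉ s, dist (g x) 0 ≤ K * dist x y := by
    intro x hx y hy
    obtain ⟨z, hz, hzs⟩ := exists_mem_segment_mem_frontier hx hy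
    have dist_le : dist x z ≤ dist x y := by
      linarith [dist_add_dist_of_mem_segment hz, dist_nonneg (x := z) (y := y)]
    calc dist (g x) 0 = dist (g x) (g z) := by rw [hfr z hzs]
      _ ≤ K * dist x z := hg.dist_le_mul x hx z (hs.frontier_subset hzs)
      _ ≤ K * dist x y := by gcongr
  refine LipschitzWith.of_dist_le_mul fun x y => ?_
  by_cases hx : x ∈ s <;> by_cases hy : y ∈ s
  · simpa [hx, hy] using hg.dist_le_mul x hx y hy
  · simpa [hx, hy] using crossing x hx y hy
  · simpa [hx, hy, dist_comm] using crossing y hy x hx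
  · simp only [indicator_of_notMem hx, indicator_of_notMem hy, dist_self]
    positivity

theorem bijOn_interior_id_add [CompleteSpace E] (hs : IsClosed s) (hK : K < 1)
    (hg : LipschitzOnWith K g s) (hfr : ∀ x ∈ frontier s, g x = 0) :
    BijOn (fun x => x + g x) (interior s) (interior s) := by
  let Φ := fun x => x + s.indicator g x
  have Φ_bij : Function.Bijective Φ :=
    bijective_id_add_of_lipschitzWith hK (lipschitzWith_indicator hs hg hfr)
  have Φ_compl : ∀ x ∉ interior s, Φ x = x := by
    intro x hx
    by_cases hxs : x ∈ s
    · simp [Φ, hxs, hfr x ⟨subset_closure hxs, hx⟩]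
    · simp [Φ, hxs]
  have Φ_maps : MapsTo Φ (interior s) (interior s) := fun x hx => by
    by_contra hΦx
    exact hΦx (by rwa [Φ_bij.injective (Φ_compl _ hΦx)])
  have Φ_bijOn : BijOn Φ (interior s) (interior s) := by
    refine ⟨Φ_maps, Φ_bij.injective.injOn, fun y hy => ?_⟩
    obtain ⟨x, rfl⟩ := Φ_bij.surjective y
    refine ⟨x, ?_, rfl⟩
    by_contra hx
    exact hx (by rwa [Φ_compl x hx] at hy)
  exact Φ_bijOn.congr fun x hx => by simp [Φ, interior_subset hx]

theorem integral_interior_det_one_add_fderiv [FiniteDimensional ℝ E] [MeasurableSpace E]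
    [BorelSpace E] (μ : Measure E) [μ.IsAddHaarMeasure] {U : Set E} (hs : IsCompact s)
    (hconv : Convex ℝ s) (hU : IsOpen U) (hsU : s ⊆ U) (hg : ContDiffOn ℝ 1 g U)
    (hfr : ∀ x ∈ frontier s, g x = 0) :
    ∫ x in interior s, (1 + fderiv ℝ g x).det ∂μ = μ.real (interior s) := by
  have : CompleteSpace E := FiniteDimensional.complete ℝ E
  obtain ⟨K, hK⟩ := (hg.mono hsU).exists_lipschitzOnWith one_ne_zero hconv hs
  have differentiable : ∀ x ∈ interior s, DifferentiableAt ℝ g x := fun x hx =>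
    (hg.differentiableOn one_ne_zero).differentiableAt (hU.mem_nhds (hsU (interior_subset hx)))
  have norm_fderiv_le : ∀ x ∈ interior s, ‖fderiv ℝ g x‖ ≤ K := fun x hx =>
    norm_fderiv_le_of_lipschitzOn ℝ (mem_interior_iff_mem_nhds.1 hx) hK
  have continuousOn_det (t : ℝ) : ContinuousOn (fun x => (1 + t • fderiv ℝ g x).det) s :=
    ContinuousLinearMap.continuous_det.comp_continuousOn (continuousOn_const.add
      (((hg.continuousOn_fderiv_of_isOpen hU le_rfl).mono hsU).const_smul t))
  refine integral_det_one_add_eq_of_forall_smul (ε := (K + 1 : ℝ)⁻¹) (by positivity)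
    (fun t _ => ((continuousOn_det t).integrableOn_compact hs).mono_set interior_subset) ?_
  rintro t ⟨ht, htε⟩
  have htK : t * (K + 1) < 1 := (lt_inv_mul_iff₀' (by positivity)).1 (by simpa using htε)
  lift t to NNReal using ht.le
  have smul_lipschitz : LipschitzOnWith (t * K) (fun x => (t : ℝ) • g x) s := by
    simpa [Function.comp_def] using (lipschitzWith_smul (t : ℝ)).comp_lipschitzOnWith hK
  have bij := bijOn_interior_id_add hs.isClosed (by exact_mod_cast (by nlinarith : (t * K : ℝ) < 1))
    smul_lipschitz fun x hx => by rw [hfr x hx, smul_zero]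
  have hasFDeriv : ∀ x ∈ interior s, HasFDerivWithinAt (fun x => x + (t : ℝ) • g x)
      (1 + (t : ℝ) • fderiv ℝ g x) (interior s) x := fun x hx =>
    ((hasFDerivAt_id x).add ((differentiable x hx).hasFDerivAt.const_smul _)).hasFDerivWithinAt
  have det_pos : ∀ x ∈ interior s, 0 < (1 + (t : ℝ) • fderiv ℝ g x).det := fun x hx =>
    det_one_add_pos_of_norm_lt_one <| by
      rw [norm_smul, Real.norm_of_nonneg t.coe_nonneg]
      nlinarith [norm_fderiv_le x hx, norm_nonneg (fderiv ℝ g x)]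
  calc ∫ x in interior s, (1 + (t : ℝ) • fderiv ℝ g x).det ∂μ
      = ∫ x in interior s, |(1 + (t : ℝ) • fderiv ℝ g x).det| • (1 : ℝ) ∂μ :=
        setIntegral_congr_fun isOpen_interior.measurableSet fun x hx => by
          simp [abs_of_pos (det_pos x hx)]
    _ = μ.real (interior s) := by
        rw [← integral_image_eq_integral_abs_det_fderiv_smul μ isOpen_interior.measurableSet
          hasFDeriv bij.injOn fun _ => (1 : ℝ), bij.image_eq]
        simp

end Perturbation

section Ray

variable {E : Type*} [NormedAddCommGroup E] [InnerProductSpace ℝ E]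

/-- The discriminant of the quadratic equation `‖x + s • u‖ ^ 2 = 1` in `s`. -/
noncomputable def rayDiscr (x u : E) : ℝ :=
  inner ℝ x u ^ 2 + ‖u‖ ^ 2 * (1 - ‖x‖ ^ 2)

/-- The larger root `s` of `‖x + s • u‖ ^ 2 = 1`, that is, the time at which the ray from `x` in the
direction `u` leaves the unit ball.  It is meaningful for `u ≠ 0` and `0 ≤ rayDiscr x u`. -/
noncomputable def rayExit (x u : E) : ℝ :=
  (-inner ℝ x u + √(rayDiscr x u)) / ‖u‖ ^ 2

variable {x u : E}

theorem rayDiscr_pos_of_norm_lt_one (hx : ‖x‖ < 1) (hu : u ≠ 0) : 0 < rayDiscr x u := by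
  have : 0 < 1 - ‖x‖ ^ 2 := by nlinarith [norm_nonneg x]
  unfold rayDiscr
  positivity

theorem rayDiscr_of_norm_eq_one (hx : ‖x‖ = 1) : rayDiscr x u = inner ℝ x u ^ 2 := by
  simp [rayDiscr, hx]

theorem rayExit_eq_zero_of_norm_eq_one (hx : ‖x‖ = 1) (hu : 0 ≤ inner ℝ x u) :
    rayExit x u = 0 := by
  simp [rayExit, rayDiscr_of_norm_eq_one hx, Real.sqrt_sq hu]

theorem norm_add_rayExit_smul (hu : u ≠ 0) (hd : 0 ≤ rayDiscr x u) :
    ‖x + rayExit x u • u‖ = 1 := by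
  have norm_ne : ‖u‖ ^ 2 ≠ 0 := by positivity
  have rayExit_mul : rayExit x u * ‖u‖ ^ 2 + inner ℝ x u = √(rayDiscr x u) := by
    rw [rayExit, div_mul_cancel₀ _ norm_ne]
    ring
  have quadratic := Real.sq_sqrt hd
  rw [← rayExit_mul, rayDiscr] at quadratic
  refine (pow_eq_one_iff_of_nonneg (norm_nonneg _) two_ne_zero).1 (mul_right_cancel₀ norm_ne ?_)
  rw [norm_add_sq_real, inner_smul_right, norm_smul, mul_pow, Real.norm_eq_abs, sq_abs]
  linear_combination quadratic

theorem inner_sub_pos_of_norm_le_one {y : E} (hx : ‖x‖ = 1) (hy : ‖y‖ ≤ 1) (hxy : x ≠ y) :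
    0 < inner ℝ x (x - y) := by
  have sub_sq : 0 < ‖x - y‖ ^ 2 := by
    have := norm_pos_iff.2 (sub_ne_zero.2 hxy)
    positivity
  rw [norm_sub_sq_real, hx] at sub_sq
  rw [inner_sub_right, real_inner_self_eq_norm_sq, hx]
  nlinarith [norm_nonneg y]

end Ray

section Retraction

variable {E : Type*} [NormedAddCommGroup E] [InnerProductSpace ℝ E] [FiniteDimensional ℝ E]

theorem det_eq_zero_of_eventually_norm_eq {r : E → E} {r' : E →L[ℝ] E} {x : E} {c : ℝ}
    (hr : HasFDerivAt r r' x) (hc : c ≠ 0) (h : ∀ᶠ y in nhds x, ‖r y‖ = c) : r'.det = 0 := by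
  have norm_sq_const : HasFDerivAt (fun y => ‖r y‖ ^ 2) (0 : E →L[ℝ] ℝ) x :=
    (hasFDerivAt_const (c ^ 2) x).congr_of_eventuallyEq (h.mono fun y hy => by simp only [hy])
  have inner_eq_zero (v : E) : inner ℝ (r x) (r' v) = 0 := by
    simpa using DFunLike.congr_fun (hr.norm_sq.unique norm_sq_const) v
  by_contra hdet
  have ker_eq_bot : r'.toLinearMap.ker = ⊥ :=
    not_not.1 (mt LinearMap.det_eq_zero_iff_ker_ne_bot.2 hdet)
  obtain ⟨v, hv⟩ := LinearMap.range_eq_top.1 (LinearMap.ker_eq_bot_iff_range_eq_top.1 ker_eq_bot)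
    (r x)
  have r_eq_zero : r x = 0 := inner_self_eq_zero.1 (hv ▸ inner_eq_zero v)
  exact hc (by rw [← h.self_of_nhds, r_eq_zero, norm_zero])

theorem not_contDiffOn_retraction_sphere {r : E → E} {U : Set E} (hU : IsOpen U)
    (hBU : closedBall (0 : E) 1 ⊆ U) (hmaps : MapsTo r (ball 0 1) (sphere 0 1))
    (hid : ∀ x ∈ sphere (0 : E) 1, r x = x) : ¬ ContDiffOn ℝ 1 r U := by
  intro hr
  borelize E
  let μ : Measure E := Measure.addHaar
  have differentiable : ∀ x ∈ ball (0 : E) 1, DifferentiableAt ℝ r x := fun x hx =>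
    (hr.differentiableOn one_ne_zero).differentiableAt
      (hU.mem_nhds (hBU (ball_subset_closedBall hx)))
  have integral_eq : ∫ x in ball (0 : E) 1, (1 + fderiv ℝ (fun y => r y - y) x).det ∂μ =
      μ.real (ball 0 1) := by
    rw [← interior_closedBall (0 : E) one_ne_zero]
    exact integral_interior_det_one_add_fderiv μ (isCompact_closedBall 0 1)
      (convex_closedBall 0 1) hU hBU (hr.sub contDiffOn_id) fun x hx => by
        rw [hid x (frontier_closedBall (0 : E) one_ne_zero ▸ hx), sub_self]
  have det_eq_zero : ∀ x ∈ ball (0 : E) 1, (1 + fderiv ℝ (fun y => r y - y) x).det = 0 := by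
    intro x hx
    have one_add_fderiv : 1 + fderiv ℝ (fun y => r y - y) x = fderiv ℝ r x := by
      rw [fderiv_fun_sub (differentiable x hx) differentiableAt_fun_id, fderiv_fun_id]
      exact add_sub_cancel _ _
    rw [one_add_fderiv]
    refine det_eq_zero_of_eventually_norm_eq (differentiable x hx).hasFDerivAt one_ne_zero ?_
    filter_upwards [isOpen_ball.mem_nhds hx] with y hy using mem_sphere_zero_iff_norm.1 (hmaps hy)
  rw [setIntegral_congr_fun measurableSet_ball det_eq_zero, integral_zero] at integral_eq
  have ball_pos : 0 < μ.real (ball 0 1) :=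
    ENNReal.toReal_pos (measure_ball_pos μ 0 one_pos).ne' measure_ball_lt_top.ne
  exact ball_pos.ne integral_eq

theorem exists_isFixedPt_of_contDiff {P : E → E} (hP : ContDiff ℝ 1 P) (hP1 : ∀ x, ‖P x‖ ≤ 1) :
    ∃ x, Function.IsFixedPt P x := by
  by_contra! hne
  have u_ne (x : E) : x - P x ≠ 0 := sub_ne_zero.2 (Ne.symm (hne x))
  have inner_pos (x : E) (hx : ‖x‖ = 1) : 0 < inner ℝ x (x - P x) :=
    inner_sub_pos_of_norm_le_one hx (hP1 x) (Ne.symm (hne x))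
  have u_contDiff : ContDiff ℝ 1 fun x => x - P x := contDiff_id.sub hP
  have inner_contDiff : ContDiff ℝ 1 fun x => inner ℝ x (x - P x) := contDiff_id.inner ℝ u_contDiff
  have discr_contDiff : ContDiff ℝ 1 fun x => rayDiscr x (x - P x) :=
    (inner_contDiff.pow 2).add
      ((u_contDiff.norm_sq ℝ).mul (contDiff_const.sub (contDiff_id.norm_sq ℝ)))
  have discr_pos (x : E) (hx : ‖x‖ ≤ 1) : 0 < rayDiscr x (x - P x) := by
    rcases hx.lt_or_eq with h | h
    · exact rayDiscr_pos_of_norm_lt_one h (u_ne x)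
    · rw [rayDiscr_of_norm_eq_one h]
      exact pow_pos (inner_pos x h) 2
  refine not_contDiffOn_retraction_sphere (r := fun x => x + rayExit x (x - P x) • (x - P x))
    (isOpen_lt continuous_const discr_contDiff.continuous)
    (fun x hx => discr_pos x (mem_closedBall_zero_iff.1 hx)) (fun x hx => ?_) (fun x hx => ?_) ?_
  · exact mem_sphere_zero_iff_norm.2
      (norm_add_rayExit_smul (u_ne x) (discr_pos x (mem_ball_zero_iff.1 hx).le).le)
  · have norm_x := mem_sphere_zero_iff_norm.1 hx
    rw [rayExit_eq_zero_of_norm_eq_one norm_x (inner_pos x norm_x).le, zero_smul, add_zero]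
  · have sqrt_contDiff := discr_contDiff.contDiffOn.sqrt
      fun (x : E) (hx : 0 < rayDiscr x (x - P x)) => hx.ne'
    exact contDiffOn_id.add <| ((inner_contDiff.neg.contDiffOn.add sqrt_contDiff).div
      (u_contDiff.norm_sq ℝ).contDiffOn fun x _ => by have := u_ne x; positivity).smul
        u_contDiff.contDiffOn

/-- Brouwer's theorem: a smooth approximation `g` of `F`, rescaled to map into the unit ball, has a
fixed point, which `F` moves by little. -/
theorem exists_isFixedPt_of_norm_le_one {F : E → E} (hF : Continuous F) (hF1 : ∀ x, ‖F x‖ ≤ 1) :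
    ∃ x, Function.IsFixedPt F x := by
  obtain ⟨x₀, -, hmin⟩ := (isCompact_closedBall (0 : E) 1).exists_isMinOn ⟨0, by simp⟩
    (f := fun x => ‖F x - x‖) (by fun_prop)
  by_contra! hne
  obtain ⟨δ, hδ, hδ_lt⟩ : ∃ δ > 0, 2 * δ < ‖F x₀ - x₀‖ := by
    have : 0 < ‖F x₀ - x₀‖ := norm_pos_iff.2 (sub_ne_zero.2 (hne x₀))
    exact ⟨‖F x₀ - x₀‖ / 4, by positivity, by linarith⟩
  obtain ⟨g, hg, hgF, -⟩ := hF.exists_contDiff_approx 1 (ε := fun _ => δ) continuous_const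
    fun _ => hδ
  have norm_g (x : E) : ‖(1 + δ)⁻¹ • g x‖ ≤ 1 := by
    have := norm_le_norm_add_norm_sub' (g x) (F x)
    rw [norm_smul, Real.norm_of_nonneg (by positivity), inv_mul_le_iff₀ (by positivity), mul_one]
    linarith [hF1 x, dist_eq_norm (g x) (F x), hgF x]
  obtain ⟨x, hx⟩ := exists_isFixedPt_of_contDiff (contDiff_const.smul hg) norm_g
  have norm_x : ‖x‖ ≤ 1 := hx ▸ norm_g x
  have g_eq : g x = x + δ • x := by
    have : g x = (1 + δ) • x := (inv_smul_eq_iff₀ (by positivity)).1 hx.eq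
    rwa [add_smul, one_smul] at this
  have norm_sub_le : ‖F x - x‖ ≤ 2 * δ := calc
    ‖F x - x‖ = ‖(F x - g x) + δ • x‖ := by rw [g_eq]; congr 1; abel
    _ ≤ ‖F x - g x‖ + ‖δ • x‖ := norm_add_le _ _
    _ ≤ δ + δ * 1 := by
      rw [norm_sub_rev, ← dist_eq_norm, norm_smul, Real.norm_of_nonneg hδ.le]
      gcongr
      exact (hgF x).le
    _ = 2 * δ := by ring
  exact (hδ_lt.trans_le (hmin (mem_closedBall_zero_iff.2 norm_x))).not_ge norm_sub_le

end Retraction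

end Brouwer

/-! ### Schauder's fixed point theorem -/

section Schauder

section Simplex

variable {ι : Type*} [Fintype ι]

/-- A retraction of the space `ι → ℝ` onto the standard simplex: cut off negative coordinates,
spread what is missing to a total of `1` evenly, and normalize. -/
noncomputable def simplexRetraction (a : ι → ℝ) (i : ι) : ℝ :=
  (max 0 (a i) + max 0 (1 - ∑ j, max 0 (a j)) / Fintype.card ι) / max 1 (∑ j, max 0 (a j))

theorem continuous_simplexRetraction : Continuous (simplexRetraction (ι := ι)) := by
  have sum_continuous : Continuous fun a : ι → ℝ => ∑ j, max 0 (a j) := by fun_prop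
  refine continuous_pi fun i => Continuous.div ?_ (continuous_const.max sum_continuous) fun a => by
    positivity
  exact (continuous_const.max (continuous_apply i)).add
    ((continuous_const.max (continuous_const.sub sum_continuous)).div_const _)

theorem simplexRetraction_mem [Nonempty ι] (a : ι → ℝ) :
    simplexRetraction a ∈ stdSimplex ℝ ι := by
  refine ⟨fun i => by unfold simplexRetraction; positivity, ?_⟩
  simp only [simplexRetraction]
  rw [← Finset.sum_div, Finset.sum_add_distrib, Finset.sum_const, Finset.card_univ, nsmul_eq_mul,
    mul_div_cancel₀ _ (by positivity), div_eq_one_iff_eq (by positivity)]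
  rcases le_total (∑ j, max 0 (a j)) 1 with h | h
  · rw [max_eq_right (sub_nonneg.2 h), max_eq_left h]
    ring
  · rw [max_eq_left (sub_nonpos.2 h), max_eq_right h, add_zero]

theorem simplexRetraction_eq_self {a : ι → ℝ} (ha : a ∈ stdSimplex ℝ ι) :
    simplexRetraction a = a := by
  have sum_eq : ∑ j, max 0 (a j) = 1 := by
    simpa only [max_eq_right (ha.1 _)] using ha.2
  ext i
  simp [simplexRetraction, sum_eq, ha.1 i]

theorem norm_toLp_le_one_of_mem_stdSimplex {a : ι → ℝ} (ha : a ∈ stdSimplex ℝ ι) :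
    ‖WithLp.toLp 2 a‖ ≤ 1 := by
  rw [EuclideanSpace.norm_eq, Real.sqrt_le_one, ← ha.2]
  refine Finset.sum_le_sum fun i _ => ?_
  have : a i ≤ 1 := ha.2 ▸ Finset.single_le_sum (fun j _ => ha.1 j) (Finset.mem_univ i)
  simpa using pow_le_of_le_one (ha.1 i) this two_ne_zero

theorem exists_isFixedPt_stdSimplex [Nonempty ι] {G : (ι → ℝ) → ι → ℝ}
    (hG : ContinuousOn G (stdSimplex ℝ ι)) (hmaps : MapsTo G (stdSimplex ℝ ι) (stdSimplex ℝ ι)) :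
    ∃ a ∈ stdSimplex ℝ ι, Function.IsFixedPt G a := by
  let Φ : EuclideanSpace ℝ ι → EuclideanSpace ℝ ι := fun a =>
    WithLp.toLp 2 (G (simplexRetraction a.ofLp))
  have Φ_continuous : Continuous Φ := (PiLp.continuous_toLp 2 _).comp <|
    hG.comp_continuous (continuous_simplexRetraction.comp (PiLp.continuous_ofLp 2 _))
      fun a => simplexRetraction_mem a.ofLp
  obtain ⟨a, ha⟩ := exists_isFixedPt_of_norm_le_one Φ_continuous fun a =>
    norm_toLp_le_one_of_mem_stdSimplex (hmaps (simplexRetraction_mem a.ofLp))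
  have G_eq : G (simplexRetraction a.ofLp) = a.ofLp := congrArg WithLp.ofLp ha.eq
  have a_mem : a.ofLp ∈ stdSimplex ℝ ι := G_eq ▸ hmaps (simplexRetraction_mem a.ofLp)
  exact ⟨a.ofLp, a_mem, by rwa [simplexRetraction_eq_self a_mem] at G_eq⟩

end Simplex

variable {E : Type*} [NormedAddCommGroup E] [NormedSpace ℝ E] {K : Set E} {F : E → E}

/-- Schauder projection: Brouwer's theorem for the barycentric coordinates with respect to a finite
`ε`-net `T` of `K`, into which `F` is pulled by a partition of unity. -/
theorem exists_dist_lt_of_mapsTo_convex (hK : IsCompact K) (hconv : Convex ℝ K) (hne : K.Nonempty)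
    (hF : ContinuousOn F K) (hmaps : MapsTo F K K) {ε : ℝ} (hε : 0 < ε) :
    ∃ x ∈ K, dist (F x) x < ε := by
  obtain ⟨T, hTK, hTfin, hTcov⟩ := hK.finite_cover_balls hε
  have : Fintype T := hTfin.fintype
  have : Nonempty T := by
    obtain ⟨y, hy⟩ := hne
    obtain ⟨i, hi, -⟩ := mem_iUnion₂.1 (hTcov hy)
    exact ⟨⟨i, hi⟩⟩
  obtain ⟨w, hw⟩ := PartitionOfUnity.exists_isSubordinate hK.isClosed
    (fun i : T => Metric.ball (i : E) ε) (fun _ => Metric.isOpen_ball)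
    (by rwa [iUnion_coe_set])
  let y : (T → ℝ) → E := fun a => ∑ i, a i • (i : E)
  have y_mem : MapsTo y (stdSimplex ℝ T) K := fun a ha =>
    hconv.sum_mem (fun i _ => ha.1 i) ha.2 fun i _ => hTK i.2
  have y_continuous : Continuous y := by fun_prop
  obtain ⟨a, ha, hfix⟩ := exists_isFixedPt_stdSimplex (G := fun a i => w i (F (y a)))
    (continuousOn_pi.2 fun i => (w i).continuous.comp_continuousOn
      (hF.comp y_continuous.continuousOn y_mem))
    fun a ha => ⟨fun i => w.nonneg i _, by
      simpa [finsum_eq_sum_of_fintype] using w.sum_eq_one (hmaps (y_mem ha))⟩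
  refine ⟨y a, y_mem ha, ?_⟩
  have y_eq : y a = ∑ᶠ i, w i (F (y a)) • (i : E) := by
    rw [finsum_eq_sum_of_fintype]
    exact Finset.sum_congr rfl fun i _ => by rw [← congrFun hfix.eq i]
  have finsum_mem := w.finsum_smul_mem_convex (hmaps (y_mem ha))
    (g := fun i _ => (i : E))
    (fun i hi => Metric.mem_ball_comm.1 (hw i (subset_closure hi))) (convex_ball _ _)
  rw [← y_eq] at finsum_mem
  exact Metric.mem_ball'.1 finsum_mem

theorem exists_isFixedPt_of_isCompact_of_convex (hK : IsCompact K) (hconv : Convex ℝ K)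
    (hne : K.Nonempty) (hF : ContinuousOn F K) (hmaps : MapsTo F K K) :
    ∃ x ∈ K, Function.IsFixedPt F x := by
  obtain ⟨x, hx, hmin⟩ := hK.exists_isMinOn hne (f := fun x => dist (F x) x)
    (by fun_prop)
  refine ⟨x, hx, ?_⟩
  by_contra hfix
  obtain ⟨y, hy, hlt⟩ :=
    exists_dist_lt_of_mapsTo_convex hK hconv hne hF hmaps (dist_pos.2 hfix)
  exact hlt.not_ge (hmin hy)

end Schauder

/-! ### The delay equation -/

section DelayEquation

variable {h φ x : ℝ → ℝ}

/-- `x` solves the delay equation `x'(t) = h (x (t - 1))` on `[0, ∞)`, in integrated form, with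
history `φ`.  Histories are prescribed on all of `(-∞, 0]`; only `[-1, 0]` matters for `x` on
`[0, ∞)`. -/
structure IsDelaySolution (h φ x : ℝ → ℝ) : Prop where
  continuous : Continuous x
  eq_history : ∀ t ≤ 0, x t = φ t
  eq_integral : ∀ t, 0 ≤ t → x t = φ 0 + ∫ s in (0 : ℝ)..t, h (x (s - 1))

/-- The integral operator whose fixed points solve the delay equation with history `φ`. -/
noncomputable def delayStep (h φ u : ℝ → ℝ) (t : ℝ) : ℝ :=
  φ (min t 0) + ∫ s in (0 : ℝ)..max t 0, h (u (s - 1))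

/-- The solution of the delay equation by the method of steps: the `n`-th iterate of `delayStep` is
exact on `(-∞, n]`. -/
noncomputable def delaySolution (h φ : ℝ → ℝ) (t : ℝ) : ℝ :=
  (delayStep h φ)^[⌈t⌉₊] φ t

theorem continuous_delayStep (hh : Continuous h) (hφ : Continuous φ) {u : ℝ → ℝ}
    (hu : Continuous u) : Continuous (delayStep h φ u) := by
  have integrand : Continuous fun s => h (u (s - 1)) := by fun_prop
  have primitive : Continuous fun t => ∫ s in (0 : ℝ)..t, h (u (s - 1)) :=
    intervalIntegral.continuous_primitive (fun a b => integrand.intervalIntegrable a b) 0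
  exact (hφ.comp (by fun_prop)).add (primitive.comp (by fun_prop : Continuous fun t : ℝ => max t 0))

theorem continuous_delayStep_iterate (hh : Continuous h) (hφ : Continuous φ) (n : ℕ) :
    Continuous ((delayStep h φ)^[n] φ) := by
  induction n with
  | zero => exact hφ
  | succ n ih =>
    rw [Function.iterate_succ_apply']
    exact continuous_delayStep hh hφ ih

theorem eqOn_delayStep {u v : ℝ → ℝ} {a : ℝ} (ha : -1 ≤ a) (huv : EqOn u v (Iic a)) :
    EqOn (delayStep h φ u) (delayStep h φ v) (Iic (a + 1)) := fun t ht => by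
  refine congrArg (φ (min t 0) + ·) (intervalIntegral.integral_congr fun s hs => ?_)
  rw [uIcc_of_le (le_max_right t 0)] at hs
  have hs' : s ≤ a + 1 := hs.2.trans (max_le ht (by linarith))
  simp only [huv (show s - 1 ∈ Iic a from by simpa [sub_le_iff_le_add] using hs')]

theorem delayStep_iterate_succ_eqOn (n : ℕ) :
    EqOn ((delayStep h φ)^[n + 1] φ) ((delayStep h φ)^[n] φ) (Iic n) := by
  induction n with
  | zero =>
    intro t ht
    have ht : t ≤ 0 := by simpa using ht
    simp [delayStep, ht]
  | succ n ih =>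
    rw [Function.iterate_succ_apply' _ (n + 1), Function.iterate_succ_apply' _ n, Nat.cast_succ]
    exact eqOn_delayStep (by linarith [n.cast_nonneg (α := ℝ)])
      (by simpa only [Function.iterate_succ_apply'] using ih)

theorem delaySolution_eqOn (n : ℕ) : EqOn (delaySolution h φ) ((delayStep h φ)^[n] φ) (Iic n) := by
  have iterate_eq : ∀ k m : ℕ, k ≤ m → ∀ t : ℝ, t ≤ k →
      (delayStep h φ)^[m] φ t = (delayStep h φ)^[k] φ t := by
    intro k m hkm t ht
    induction m, hkm using Nat.le_induction with
    | base => rfl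
    | succ m hkm ih =>
      exact (delayStep_iterate_succ_eqOn m (ht.trans (Nat.cast_le.2 hkm))).trans ih
  exact fun t ht => (iterate_eq _ n (Nat.ceil_le.2 ht) t (Nat.le_ceil t)).symm

theorem isDelaySolution_delaySolution (hh : Continuous h) (hφ : Continuous φ) :
    IsDelaySolution h φ (delaySolution h φ) where
  continuous := by
    refine continuous_iff_continuousAt.2 fun t => ?_
    obtain ⟨n, hn⟩ := exists_nat_gt t
    refine (continuous_delayStep_iterate hh hφ n).continuousAt.congr ?_
    filter_upwards [Iio_mem_nhds hn] with s hs
    exact (delaySolution_eqOn n (mem_Iio.1 hs).le).symm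
  eq_history t ht := delaySolution_eqOn 0 (by simpa using ht)
  eq_integral t ht := by
    obtain ⟨n, hn⟩ := exists_nat_ge t
    have hn' : t ≤ (n + 1 : ℕ) := hn.trans (by simp)
    rw [delaySolution_eqOn (n + 1) hn', Function.iterate_succ_apply',
      ← eqOn_delayStep (by linarith [ht.trans hn]) (delaySolution_eqOn n) (by simpa using hn'),
      delayStep, min_eq_right ht, max_eq_left ht]

theorem eqOn_of_eq_integral {u v : ℝ → ℝ} {A : ℝ}
    (hu : ∀ t ∈ Icc 0 A, u t = u 0 + ∫ s in (0 : ℝ)..t, h (u (s - 1)))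
    (hv : ∀ t ∈ Icc 0 A, v t = v 0 + ∫ s in (0 : ℝ)..t, h (v (s - 1)))
    (huv : EqOn u v (Icc (-1) 0)) : EqOn u v (Icc (-1) A) := by
  have eq_of_le_nat : ∀ n : ℕ, ∀ t ∈ Icc (-1) A, t ≤ n → u t = v t := by
    intro n
    induction n with
    | zero => exact fun t ht htn => huv ⟨ht.1, by simpa using htn⟩
    | succ n ih =>
      intro t ht htn
      rcases le_total t 0 with ht0 | ht0
      · exact huv ⟨ht.1, ht0⟩
      · rw [hu t ⟨ht0, ht.2⟩, hv t ⟨ht0, ht.2⟩, huv ⟨by norm_num, le_rfl⟩]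
        refine congrArg (v 0 + ·) (intervalIntegral.integral_congr fun s hs => ?_)
        rw [uIcc_of_le ht0] at hs
        push_cast at htn
        simp only [ih (s - 1) ⟨by linarith [hs.1], by linarith [hs.2, ht.2]⟩ (by linarith [hs.2])]
  exact fun t ht => eq_of_le_nat ⌈t⌉₊ t ht (Nat.le_ceil t)

namespace IsDelaySolution

theorem sub_eq_integral (hx : IsDelaySolution h φ x) (hh : Continuous h) {s t : ℝ} (hs : 0 ≤ s)
    (ht : 0 ≤ t) : x t - x s = ∫ u in s..t, h (x (u - 1)) := by
  have hc : Continuous fun u => h (x (u - 1)) := by have := hx.continuous; fun_prop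
  rw [hx.eq_integral t ht, hx.eq_integral s hs, add_sub_add_left_eq_sub,
    intervalIntegral.integral_interval_sub_left (hc.intervalIntegrable _ _)
      (hc.intervalIntegrable _ _)]

theorem hasDerivAt (hx : IsDelaySolution h φ x) (hh : Continuous h) {t : ℝ} (ht : 0 < t) :
    HasDerivAt x (h (x (t - 1))) t := by
  have hc : Continuous fun u => h (x (u - 1)) := by have := hx.continuous; fun_prop
  refine ((hc.integral_hasStrictDerivAt 0 t).hasDerivAt.const_add (φ 0)).congr_of_eventuallyEq ?_
  filter_upwards [Ioi_mem_nhds ht] with s hs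
  exact hx.eq_integral s (le_of_lt hs)

theorem dist_le_of_dist_delayed_le {φ' x' : ℝ → ℝ} {t δ : ℝ} (hx : IsDelaySolution h φ x)
    (hx' : IsDelaySolution h φ' x') (hh : Continuous h) (ht : 0 ≤ t)
    (hδ : ∀ u ≤ t, dist (h (x (u - 1))) (h (x' (u - 1))) ≤ δ) :
    dist (x t) (x' t) ≤ dist (φ 0) (φ' 0) + δ * t := by
  have hc : Continuous fun u => h (x (u - 1)) := by have := hx.continuous; fun_prop
  have hc' : Continuous fun u => h (x' (u - 1)) := by have := hx'.continuous; fun_prop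
  rw [hx.eq_integral t ht, hx'.eq_integral t ht]
  refine (dist_add_add_le _ _ _ _).trans (add_le_add_right ?_ _)
  rw [dist_eq_norm, ← intervalIntegral.integral_sub (hc.intervalIntegrable _ _)
    (hc'.intervalIntegrable _ _)]
  refine (intervalIntegral.norm_integral_le_of_norm_le_const (C := δ) fun u hu => ?_).trans_eq
    (by rw [sub_zero, abs_of_nonneg ht])
  rw [uIoc_of_le ht] at hu
  rw [← dist_eq_norm]
  exact hδ u hu.2

theorem tendstoUniformlyOn_Iic {ι : Type*} {l : Filter ι} {Φ X : ι → ℝ → ℝ}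
    (hh : UniformContinuous h) (hX : ∀ i, IsDelaySolution h (Φ i) (X i))
    (hx : IsDelaySolution h φ x) (hΦ : TendstoUniformly Φ φ l) (N : ℕ) :
    TendstoUniformlyOn X x l (Iic N) := by
  have eq_history_zero : ∀ i t, t ≤ 0 → dist (x t) (X i t) = dist (φ t) (Φ i t) := fun i t ht => by
    rw [hx.eq_history t ht, (hX i).eq_history t ht]
  induction N with
  | zero =>
    rw [Metric.tendstoUniformlyOn_iff]
    intro ε hε
    filter_upwards [Metric.tendstoUniformly_iff.1 hΦ ε hε] with i hi t ht
    exact (eq_history_zero i t (by simpa using ht)).trans_lt (hi t)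
  | succ N ih =>
    rw [Metric.tendstoUniformlyOn_iff]
    intro ε hε
    have : (0 : ℝ) < N + 1 := by positivity
    have h_delayed := Metric.tendstoUniformlyOn_iff.1 (hh.comp_tendstoUniformlyOn ih)
      (ε / (2 * (N + 1))) (by positivity)
    filter_upwards [Metric.tendstoUniformly_iff.1 hΦ (ε / 2) (by positivity), h_delayed]
      with i hi hi_delayed t ht
    rw [mem_Iic, Nat.cast_succ] at ht
    rcases le_total t 0 with ht0 | ht0
    · linarith [eq_history_zero i t ht0, hi t]
    calc
      dist (x t) (X i t) ≤ dist (φ 0) (Φ i 0) + ε / (2 * (N + 1)) * t :=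
        hx.dist_le_of_dist_delayed_le (hX i) hh.continuous ht0 fun u hu =>
          (hi_delayed (u - 1) (by rw [mem_Iic]; linarith)).le
      _ ≤ dist (φ 0) (Φ i 0) + ε / (2 * (N + 1)) * (N + 1) := by gcongr
      _ = dist (φ 0) (Φ i 0) + ε / 2 := by field_simp
      _ < ε := by linarith [hi 0]

end IsDelaySolution

end DelayEquation

/-! ### Half-waves -/

section HalfWave

variable {g φ x : ℝ → ℝ} {C c m z : ℝ}

/-- A feedback acting on positive values only: one of the half lines of `∓f`, cut off to be bounded
and uniformly continuous.  The bound `min (c * u) m ≤ g u` with `c > 1` encodes positivity together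
with steepness at `0`. -/
structure HalfLineFeedback (g : ℝ → ℝ) (C c m : ℝ) : Prop where
  uniformContinuous : UniformContinuous g
  eq_zero : ∀ u ≤ 0, g u = 0
  min_le : ∀ u, 0 ≤ u → min (c * u) m ≤ g u
  le_bound : ∀ u, g u ≤ C
  one_lt : 1 < c
  pos_level : 0 < m

/-- A history in the cone of nonzero continuous nondecreasing functions on `[-1, 0]` vanishing at
`-1`, extended to `ℝ` by constants. -/
structure AdmissibleHistory (φ : ℝ → ℝ) : Prop where
  continuous : Continuous φ
  monotone : Monotone φ
  eq_zero : ∀ t ≤ -1, φ t = 0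
  eq_apply_zero : ∀ t, 0 ≤ t → φ t = φ 0
  pos : 0 < φ 0

/-- `z` is the only zero of `x` on `[0, ∞)`, and `x` changes sign there from positive to negative.
Positivity on all of `[z - 1, z)`, which may reach into the history, is part of the notion. -/
structure IsCrossing (x : ℝ → ℝ) (z : ℝ) : Prop where
  pos : 0 < z
  apply_eq_zero : x z = 0
  pos_left : ∀ t ∈ Ico (min 0 (z - 1)) z, 0 < x t
  neg_right : ∀ t, z < t → x t < 0

/-- The first time in `[0, ∞)` at which `x` is nonpositive (and `0` if there is none). -/
noncomputable def firstNonposTime (x : ℝ → ℝ) : ℝ :=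
  sInf (Ici 0 ∩ x ⁻¹' Iic 0)

namespace HalfLineFeedback

theorem continuous (hg : HalfLineFeedback g C c m) : Continuous g :=
  hg.uniformContinuous.continuous

theorem apply_pos (hg : HalfLineFeedback g C c m) {u : ℝ} (hu : 0 < u) : 0 < g u :=
  (lt_min (mul_pos (one_pos.trans hg.one_lt) hu) hg.pos_level).trans_le (hg.min_le u hu.le)

theorem nonneg (hg : HalfLineFeedback g C c m) (u : ℝ) : 0 ≤ g u := by
  rcases le_or_gt u 0 with hu | hu
  · exact (hg.eq_zero u hu).ge
  · exact (hg.apply_pos hu).le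

theorem bound_pos (hg : HalfLineFeedback g C c m) : 0 < C :=
  (hg.apply_pos one_pos).trans_le (hg.le_bound 1)

end HalfLineFeedback

namespace AdmissibleHistory

theorem nonneg (hφ : AdmissibleHistory φ) (t : ℝ) : 0 ≤ φ t := by
  rcases le_total t (-1) with ht | ht
  · exact (hφ.eq_zero t ht).ge
  · exact (hφ.eq_zero (-1) le_rfl).ge.trans (hφ.monotone ht)

theorem le_apply_zero (hφ : AdmissibleHistory φ) (t : ℝ) : φ t ≤ φ 0 := by
  rcases le_total t 0 with ht | ht
  · exact hφ.monotone ht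
  · exact (hφ.eq_apply_zero t ht).le

end AdmissibleHistory

namespace IsCrossing

theorem nonneg_of_le (hz : IsCrossing x z) {t : ℝ} (ht : 0 ≤ t) (htz : t ≤ z) : 0 ≤ x t := by
  rcases htz.eq_or_lt with rfl | htz
  · exact hz.apply_eq_zero.ge
  · exact (hz.pos_left t ⟨(min_le_left _ _).trans ht, htz⟩).le

theorem nonpos_of_ge (hz : IsCrossing x z) {t : ℝ} (ht : z ≤ t) : x t ≤ 0 := by
  rcases ht.eq_or_lt with rfl | ht
  · exact hz.apply_eq_zero.le
  · exact (hz.neg_right t ht).le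

theorem lt_of_pos (hz : IsCrossing x z) {t : ℝ} (ht : 0 < x t) : t < z :=
  lt_of_not_ge fun h => (hz.nonpos_of_ge h).not_gt ht

theorem lt_of_neg (hz : IsCrossing x z) {t : ℝ} (ht0 : 0 ≤ t) (ht : x t < 0) : z < t :=
  lt_of_not_ge fun h => (hz.nonneg_of_le ht0 h).not_gt ht

theorem tendsto {ι : Type*} {l : Filter ι} {X : ι → ℝ → ℝ} {Z : ι → ℝ} (hz : IsCrossing x z)
    (hZ : ∀ i, IsCrossing (X i) (Z i)) (hX : ∀ t, Tendsto (X · t) l (nhds (x t))) :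
    Tendsto Z l (nhds z) := by
  refine tendsto_order.2 ⟨fun a ha => ?_, fun b hb => ?_⟩
  · obtain ⟨t, hat, htz⟩ := exists_between (max_lt ha hz.pos)
    have ht0 : 0 < t := (le_max_right _ _).trans_lt hat
    have hxt : 0 < x t := hz.pos_left t ⟨(min_le_left _ _).trans ht0.le, htz⟩
    filter_upwards [(hX t).eventually_const_lt hxt] with i hi
    exact ((le_max_left _ _).trans_lt hat).trans ((hZ i).lt_of_pos hi)
  · filter_upwards [(hX b).eventually_lt_const (hz.neg_right b hb)] with i hi
    exact (hZ i).lt_of_neg (hz.pos.trans hb).le hi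

end IsCrossing

section FirstNonposTime

theorem pos_of_lt_firstNonposTime {t : ℝ} (ht : 0 ≤ t) (htz : t < firstNonposTime x) : 0 < x t :=
  not_le.1 fun h => htz.not_ge (csInf_le ⟨0, fun _ hs => hs.1⟩ ⟨ht, h⟩)

theorem firstNonposTime_spec (hx : Continuous x) (hx0 : 0 < x 0) (hne : ∃ t, 0 ≤ t ∧ x t ≤ 0) :
    0 < firstNonposTime x ∧ x (firstNonposTime x) = 0 := by
  have hmem : firstNonposTime x ∈ Ici 0 ∩ x ⁻¹' Iic 0 :=
    (isClosed_Ici.inter (isClosed_Iic.preimage hx)).csInf_mem hne ⟨0, fun _ hs => hs.1⟩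
  have hpos : 0 < firstNonposTime x :=
    hmem.1.lt_of_ne fun h => hx0.not_ge ((congrArg x h).trans_le hmem.2)
  refine ⟨hpos, le_antisymm hmem.2 ?_⟩
  have hmem_closure : firstNonposTime x ∈ closure (Ico 0 (firstNonposTime x)) := by
    rw [closure_Ico hpos.ne]
    exact ⟨hpos.le, le_rfl⟩
  exact closure_minimal (fun t ht => (pos_of_lt_firstNonposTime ht.1 ht.2).le)
    (isClosed_Ici.preimage hx) hmem_closure

end FirstNonposTime

namespace IsDelaySolution

theorem sub_eq_neg_integral (hx : IsDelaySolution (-g) φ x) (hg : HalfLineFeedback g C c m)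
    {s t : ℝ} (hs : 0 ≤ s) (ht : 0 ≤ t) : x t - x s = -∫ u in s..t, g (x (u - 1)) := by
  rw [hx.sub_eq_integral hg.continuous.neg hs ht, ← intervalIntegral.integral_neg]
  rfl

theorem continuous_feedback (hx : IsDelaySolution (-g) φ x) (hg : HalfLineFeedback g C c m) :
    Continuous fun u => g (x (u - 1)) :=
  hg.continuous.comp (hx.continuous.comp (continuous_sub_right 1))

theorem antitoneOn (hx : IsDelaySolution (-g) φ x) (hg : HalfLineFeedback g C c m) :
    AntitoneOn x (Ici 0) := fun s hs t ht hst => by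
  have integral_nonneg : 0 ≤ ∫ u in s..t, g (x (u - 1)) :=
    intervalIntegral.integral_nonneg hst fun u _ => hg.nonneg _
  linarith [hx.sub_eq_neg_integral hg hs ht]

theorem sub_le_mul (hx : IsDelaySolution (-g) φ x) (hg : HalfLineFeedback g C c m) {s t : ℝ}
    (hs : 0 ≤ s) (hst : s ≤ t) : x s - x t ≤ C * (t - s) := by
  have integral_le : ∫ u in s..t, g (x (u - 1)) ≤ ∫ _ in s..t, C :=
    intervalIntegral.integral_mono_on hst ((hx.continuous_feedback hg).intervalIntegrable _ _)
      (by simp) fun u _ => hg.le_bound _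
  rw [intervalIntegral.integral_const, smul_eq_mul] at integral_le
  linarith [hx.sub_eq_neg_integral hg hs (hs.trans hst)]

theorem dist_le_mul (hx : IsDelaySolution (-g) φ x) (hg : HalfLineFeedback g C c m) {s t : ℝ}
    (hs : 0 ≤ s) (ht : 0 ≤ t) : dist (x s) (x t) ≤ C * dist s t := by
  wlog hst : s ≤ t generalizing s t
  · rw [dist_comm (x s), dist_comm s]
    exact this ht hs (le_of_not_ge hst)
  rw [Real.dist_eq, dist_comm, Real.dist_eq, abs_of_nonneg (sub_nonneg.2 hst),
    abs_of_nonneg (sub_nonneg.2 (hx.antitoneOn hg hs ht hst))]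
  exact hx.sub_le_mul hg hs hst

theorem mul_min_le_sub (hx : IsDelaySolution (-g) φ x) (hg : HalfLineFeedback g C c m) {s t b : ℝ}
    (hs : 0 ≤ s) (hst : s ≤ t) (hb : 0 ≤ b) (h : ∀ u ∈ Icc s t, b ≤ x (u - 1)) :
    (t - s) * min (c * b) m ≤ x s - x t := by
  have le_integral : ∫ _ in s..t, min (c * b) m ≤ ∫ u in s..t, g (x (u - 1)) := by
    refine intervalIntegral.integral_mono_on hst (by simp)
      ((hx.continuous_feedback hg).intervalIntegrable _ _) fun u hu => ?_
    refine (min_le_min_right m ?_).trans (hg.min_le _ (hb.trans (h u hu)))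
    exact mul_le_mul_of_nonneg_left (h u hu) (one_pos.trans hg.one_lt).le
  rw [intervalIntegral.integral_const, smul_eq_mul] at le_integral
  linarith [hx.sub_eq_neg_integral hg hs (hs.trans hst)]

/-- A drop by `c * x s` would make `x` negative, as `c > 1`. -/
theorem level_le_sub_of_nonneg (hx : IsDelaySolution (-g) φ x) (hg : HalfLineFeedback g C c m)
    {s : ℝ} (hs : 1 ≤ s) (hxs : 0 < x s) (hxs' : 0 ≤ x (s + 1)) : m ≤ x s - x (s + 1) := by
  have drop := hx.mul_min_le_sub hg (s := s) (t := s + 1) (b := x s) (by linarith) (by linarith)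
    hxs.le fun u hu => hx.antitoneOn hg (mem_Ici.2 (by linarith [hu.1]))
      (mem_Ici.2 (by linarith)) (by linarith [hu.2])
  rw [add_sub_cancel_left, one_mul] at drop
  rcases min_le_iff.1 drop with h | h
  · nlinarith [hg.one_lt]
  · exact h

theorem exists_nonpos (hx : IsDelaySolution (-g) φ x) (hg : HalfLineFeedback g C c m) :
    ∃ t, 0 ≤ t ∧ x t ≤ 0 := by
  by_contra! hpos
  have apply_le : ∀ n : ℕ, x (1 + n) ≤ x 1 - n * m := by
    intro n
    induction n with
    | zero => simp
    | succ n ih =>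
      have : (0 : ℝ) ≤ n := n.cast_nonneg
      have drop := hx.level_le_sub_of_nonneg hg (s := 1 + n) (by linarith)
        (hpos _ (by linarith)) (hpos _ (by linarith)).le
      rw [Nat.cast_succ, ← add_assoc]
      linarith
  obtain ⟨n, hn⟩ := exists_nat_gt (x 1 / m)
  rw [div_lt_iff₀ hg.pos_level] at hn
  linarith [hpos (1 + n) (by positivity), apply_le n]

theorem apply_sub_one_pos (hx : IsDelaySolution (-g) φ x) (hg : HalfLineFeedback g C c m)
    (hφ : AdmissibleHistory φ) (hz0 : 0 < z) (hxz : x z = 0) (hpos : ∀ t, 0 ≤ t → t < z → 0 < x t) :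
    0 < x (z - 1) := by
  by_contra! hneg
  have hz1 : z - 1 ≤ 0 := le_of_not_gt fun h => hneg.not_gt (hpos _ h.le (by linarith))
  rw [hx.eq_history _ hz1] at hneg
  have integral_eq_zero : ∫ u in (0 : ℝ)..z, g (x (u - 1)) = 0 := by
    refine (intervalIntegral.integral_congr (g := fun _ => (0 : ℝ)) fun u hu => ?_).trans
      intervalIntegral.integral_zero
    rw [uIcc_of_le hz0.le] at hu
    refine hg.eq_zero _ ?_
    rw [hx.eq_history _ (by linarith [hu.2])]
    exact (hφ.monotone (by linarith [hu.2])).trans hneg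
  have hsub := hx.sub_eq_neg_integral hg le_rfl hz0.le
  rw [integral_eq_zero, hxz, hx.eq_history 0 le_rfl] at hsub
  linarith [hφ.pos]

theorem isCrossing_firstNonposTime (hx : IsDelaySolution (-g) φ x)
    (hg : HalfLineFeedback g C c m) (hφ : AdmissibleHistory φ) :
    IsCrossing x (firstNonposTime x) := by
  have hx0 : 0 < x 0 := by rw [hx.eq_history 0 le_rfl]; exact hφ.pos
  obtain ⟨hz0, hxz⟩ := firstNonposTime_spec hx.continuous hx0 (hx.exists_nonpos hg)
  have hpos : ∀ t, 0 ≤ t → t < firstNonposTime x → 0 < x t := fun t => pos_of_lt_firstNonposTime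
  have hz1 := hx.apply_sub_one_pos hg hφ hz0 hxz hpos
  set z := firstNonposTime x
  have hwindow : ∀ t, z - 1 ≤ t → t < z → 0 < x t := by
    intro t ht htz
    rcases le_total 0 t with ht0 | ht0
    · exact hpos t ht0 htz
    · rw [hx.eq_history t ht0]
      rw [hx.eq_history (z - 1) (ht.trans ht0)] at hz1
      exact hz1.trans_le (hφ.monotone ht)
  have hneg : ∀ t, z < t → t ≤ z + 1 → x t < 0 := by
    intro t hzt htz
    have integral_pos : 0 < ∫ u in z..t, g (x (u - 1)) :=
      intervalIntegral.intervalIntegral_pos_of_pos_on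
        ((hx.continuous_feedback hg).intervalIntegrable _ _)
        (fun u hu => hg.apply_pos (hwindow _ (by linarith [hu.1]) (by linarith [hu.2]))) hzt
    linarith [hx.sub_eq_neg_integral hg hz0.le (hz0.trans hzt).le]
  refine ⟨hz0, hxz, fun t ht => ?_, fun t ht => ?_⟩
  · rcases min_le_iff.1 ht.1 with h | h
    · exact hpos t h ht.2
    · exact hwindow t h ht.2
  · rcases le_total t (z + 1) with h | h
    · exact hneg t ht h
    · exact (hx.antitoneOn hg (mem_Ici.2 (by linarith)) (hz0.trans ht).le h).trans_lt
        (hneg (z + 1) (by linarith) le_rfl)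

theorem nonneg_of_le_crossing (hx : IsDelaySolution (-g) φ x) (hφ : AdmissibleHistory φ)
    (hz : IsCrossing x z) {t : ℝ} (ht : t ≤ z) : 0 ≤ x t := by
  rcases le_total 0 t with h | h
  · exact hz.nonneg_of_le h ht
  · rw [hx.eq_history t h]
    exact hφ.nonneg t

theorem apply_eq_of_crossing_add_one_le (hx : IsDelaySolution (-g) φ x)
    (hg : HalfLineFeedback g C c m) (hz : IsCrossing x z) {t : ℝ} (ht : z + 1 ≤ t) :
    x t = x (z + 1) := by
  have hz0 := hz.pos
  have integral_eq_zero : ∫ u in (z + 1)..t, g (x (u - 1)) = 0 := by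
    refine (intervalIntegral.integral_congr (g := fun _ => (0 : ℝ)) fun u hu => ?_).trans
      intervalIntegral.integral_zero
    rw [uIcc_of_le ht] at hu
    exact hg.eq_zero _ (hz.nonpos_of_ge (by linarith [hu.1]))
  linarith [hx.sub_eq_neg_integral hg (s := z + 1) (t := t) (by linarith) (by linarith)]

theorem le_history_zero (hx : IsDelaySolution (-g) φ x) (hg : HalfLineFeedback g C c m)
    (hφ : AdmissibleHistory φ) (t : ℝ) : x t ≤ φ 0 := by
  rcases le_total 0 t with h | h
  · exact (hx.antitoneOn hg self_mem_Ici h h).trans (hx.eq_history 0 le_rfl).le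
  · rw [hx.eq_history t h]
    exact hφ.le_apply_zero t

end IsDelaySolution

end HalfWave

/-! ### The half-return map -/

section HalfReturn

variable {g φ x : ℝ → ℝ} {C c m z : ℝ}

/-- The solution of `x'(t) = -g (x (t - 1))` with history `φ`. -/
noncomputable def halfWave (g φ : ℝ → ℝ) : ℝ → ℝ :=
  delaySolution (-g) φ

/-- The zero of `halfWave g φ`. -/
noncomputable def halfWaveZero (g φ : ℝ → ℝ) : ℝ :=
  firstNonposTime (halfWave g φ)

/-- The half-return map: minus the segment of `halfWave g φ` on the unit interval that follows its
zero, translated to `[-1, 0]` and extended by constants. -/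
noncomputable def halfReturn (g φ : ℝ → ℝ) (s : ℝ) : ℝ :=
  max 0 (-halfWave g φ (halfWaveZero g φ + 1 + s))

theorem isDelaySolution_halfWave (hg : HalfLineFeedback g C c m) (hφ : AdmissibleHistory φ) :
    IsDelaySolution (-g) φ (halfWave g φ) :=
  isDelaySolution_delaySolution hg.continuous.neg hφ.continuous

theorem isCrossing_halfWaveZero (hg : HalfLineFeedback g C c m) (hφ : AdmissibleHistory φ) :
    IsCrossing (halfWave g φ) (halfWaveZero g φ) :=
  (isDelaySolution_halfWave hg hφ).isCrossing_firstNonposTime hg hφ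

theorem halfReturn_apply (hg : HalfLineFeedback g C c m) (hφ : AdmissibleHistory φ) {s : ℝ}
    (hs : -1 ≤ s) : halfReturn g φ s = -halfWave g φ (halfWaveZero g φ + 1 + s) :=
  max_eq_right (neg_nonneg.2 ((isCrossing_halfWaveZero hg hφ).nonpos_of_ge (by linarith)))

theorem halfReturn_apply_zero (hg : HalfLineFeedback g C c m) (hφ : AdmissibleHistory φ) :
    halfReturn g φ 0 = -halfWave g φ (halfWaveZero g φ + 1) := by
  rw [halfReturn_apply hg hφ (by norm_num), add_zero]

theorem halfReturn_of_le (hg : HalfLineFeedback g C c m) (hφ : AdmissibleHistory φ) {s : ℝ}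
    (hs : s ≤ -1) : halfReturn g φ s = 0 :=
  max_eq_left (neg_nonpos.2 ((isDelaySolution_halfWave hg hφ).nonneg_of_le_crossing hφ
    (isCrossing_halfWaveZero hg hφ) (by linarith)))

theorem halfReturn_of_nonneg (hg : HalfLineFeedback g C c m) (hφ : AdmissibleHistory φ) {s : ℝ}
    (hs : 0 ≤ s) : halfReturn g φ s = halfReturn g φ 0 := by
  rw [halfReturn_apply_zero hg hφ, halfReturn_apply hg hφ (by linarith),
    (isDelaySolution_halfWave hg hφ).apply_eq_of_crossing_add_one_le hg
      (isCrossing_halfWaveZero hg hφ) (by linarith)]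

theorem halfReturn_pos (hg : HalfLineFeedback g C c m) (hφ : AdmissibleHistory φ) {s : ℝ}
    (hs : -1 < s) : 0 < halfReturn g φ s := by
  rw [halfReturn_apply hg hφ hs.le]
  exact neg_pos.2 ((isCrossing_halfWaveZero hg hφ).neg_right _ (by linarith))

theorem admissibleHistory_halfReturn (hg : HalfLineFeedback g C c m) (hφ : AdmissibleHistory φ) :
    AdmissibleHistory (halfReturn g φ) where
  continuous := by
    have := (isDelaySolution_halfWave hg hφ).continuous
    unfold halfReturn
    fun_prop
  monotone r s hrs := by
    rcases le_total r (-1) with hr | hr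
    · rw [halfReturn_of_le hg hφ hr]
      exact le_max_left _ _
    · have hz0 := (isCrossing_halfWaveZero hg hφ).pos
      rw [halfReturn_apply hg hφ hr, halfReturn_apply hg hφ (hr.trans hrs)]
      exact neg_le_neg ((isDelaySolution_halfWave hg hφ).antitoneOn hg
        (mem_Ici.2 (by linarith)) (mem_Ici.2 (by linarith)) (by linarith))
  eq_zero _ := halfReturn_of_le hg hφ
  eq_apply_zero _ := halfReturn_of_nonneg hg hφ
  pos := halfReturn_pos hg hφ (by norm_num)

theorem halfReturn_sub_le (hg : HalfLineFeedback g C c m) (hφ : AdmissibleHistory φ) {r s : ℝ}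
    (hrs : r ≤ s) : halfReturn g φ s - halfReturn g φ r ≤ C * (s - r) := by
  have hC := hg.bound_pos
  have sub_le_of_ge : ∀ r s, -1 ≤ r → r ≤ s →
      halfReturn g φ s - halfReturn g φ r ≤ C * (s - r) := by
    intro r s hr hrs
    have hz0 := (isCrossing_halfWaveZero hg hφ).pos
    rw [halfReturn_apply hg hφ hr, halfReturn_apply hg hφ (hr.trans hrs)]
    linarith [(isDelaySolution_halfWave hg hφ).sub_le_mul hg (s := halfWaveZero g φ + 1 + r)
      (t := halfWaveZero g φ + 1 + s) (by linarith) (by linarith)]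
  rcases le_total (-1) r with hr | hr
  · exact sub_le_of_ge r s hr hrs
  rw [halfReturn_of_le hg hφ hr]
  rcases le_total (-1) s with hs | hs
  · have := sub_le_of_ge (-1) s le_rfl hs
    rw [halfReturn_of_le hg hφ le_rfl] at this
    nlinarith
  · rw [halfReturn_of_le hg hφ hs]
    nlinarith

theorem lipschitzWith_halfReturn (hg : HalfLineFeedback g C c m) (hφ : AdmissibleHistory φ) :
    LipschitzWith C.toNNReal (halfReturn g φ) := by
  refine LipschitzWith.of_le_add_mul _ fun s r => ?_
  rw [Real.coe_toNNReal _ hg.bound_pos.le]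
  rcases le_total r s with hrs | hrs
  · rw [Real.dist_eq, abs_of_nonneg (sub_nonneg.2 hrs)]
    linarith [halfReturn_sub_le hg hφ hrs]
  · have hmono := (admissibleHistory_halfReturn hg hφ).monotone hrs
    exact hmono.trans (le_add_of_nonneg_right (mul_nonneg hg.bound_pos.le dist_nonneg))

theorem halfReturn_zero_le (hg : HalfLineFeedback g C c m) (hφ : AdmissibleHistory φ) {B : ℝ}
    (hB : ∀ u ≤ φ 0, g u ≤ B) : halfReturn g φ 0 ≤ B := by
  have hx := isDelaySolution_halfWave hg hφ
  have hz := isCrossing_halfWaveZero hg hφ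
  have hsub := hx.sub_eq_neg_integral hg hz.pos.le (add_nonneg hz.pos.le zero_le_one)
  have integral_le : ∫ u in (halfWaveZero g φ)..(halfWaveZero g φ + 1), g (halfWave g φ (u - 1)) ≤
      ∫ _ in (halfWaveZero g φ)..(halfWaveZero g φ + 1), B :=
    intervalIntegral.integral_mono_on (by linarith)
      ((hx.continuous_feedback hg).intervalIntegrable _ _) (by simp)
      fun u _ => hB _ (hx.le_history_zero hg hφ _)
  rw [intervalIntegral.integral_const, smul_eq_mul, add_sub_cancel_left, one_mul] at integral_le
  rw [hz.apply_eq_zero, sub_zero] at hsub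
  rwa [halfReturn_apply_zero hg hφ, hsub, neg_neg]

theorem halfReturn_zero_le_mul (hg : HalfLineFeedback g C c m) (hφ : AdmissibleHistory φ) {L : ℝ}
    (hL : 0 ≤ L) (hgL : ∀ u ∈ Icc 0 (φ 0), g u ≤ L * u) : halfReturn g φ 0 ≤ L * φ 0 := by
  refine halfReturn_zero_le hg hφ fun u hu => ?_
  rcases le_total u 0 with hu0 | hu0
  · rw [hg.eq_zero u hu0]
    exact mul_nonneg hL hφ.pos.le
  · exact (hgL u ⟨hu0, hu⟩).trans (mul_le_mul_of_nonneg_left hu hL)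

/-- The drop forced one delay after a solution has been at least `b`: by the Lipschitz bound it
stays above `b / 2` for a time `b / (2 * C)`. -/
noncomputable def delayedDrop (C c m b : ℝ) : ℝ :=
  b / (2 * C) * min (c * (b / 2)) m

theorem delayedDrop_pos (hg : HalfLineFeedback g C c m) {b : ℝ} (hb : 0 < b) :
    0 < delayedDrop C c m b := by
  have hC := hg.bound_pos
  have hc := one_pos.trans hg.one_lt
  exact mul_pos (by positivity) (lt_min (by positivity) hg.pos_level)

namespace IsDelaySolution

theorem half_le_of_mem_Icc (hx : IsDelaySolution (-g) φ x) (hg : HalfLineFeedback g C c m)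
    {t b : ℝ} (ht : 0 ≤ t) (hbx : b ≤ x t) {u : ℝ} (hu : u ∈ Icc t (t + b / (2 * C))) :
    b / 2 ≤ x u := by
  have hC := hg.bound_pos
  have lip := hx.sub_le_mul hg ht hu.1
  have hCu : C * (u - t) ≤ C * (b / (2 * C)) :=
    mul_le_mul_of_nonneg_left (by linarith [hu.2]) hC.le
  have hCb : C * (b / (2 * C)) = b / 2 := by field_simp
  linarith

theorem delayedDrop_le_sub (hx : IsDelaySolution (-g) φ x) (hg : HalfLineFeedback g C c m)
    {t b r s : ℝ} (ht : 0 ≤ t) (hb : 0 < b) (hbx : b ≤ x t) (hr : 0 ≤ r) (hrt : r ≤ t + 1)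
    (hts : t + 1 + b / (2 * C) ≤ s) : delayedDrop C c m b ≤ x r - x s := by
  have hC := hg.bound_pos
  have hτ : 0 < b / (2 * C) := by positivity
  have drop := hx.mul_min_le_sub hg (s := t + 1) (t := t + 1 + b / (2 * C)) (b := b / 2)
    (by linarith) (by linarith) (by linarith) fun u hu =>
      hx.half_le_of_mem_Icc hg ht hbx ⟨by linarith [hu.1], by linarith [hu.2]⟩
  rw [add_sub_cancel_left] at drop
  have before := hx.antitoneOn hg hr (mem_Ici.2 (by linarith)) hrt
  have after := hx.antitoneOn hg (mem_Ici.2 (by linarith)) (mem_Ici.2 (by linarith)) hts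
  exact drop.trans (sub_le_sub before after)

theorem delayedDrop_le_neg (hx : IsDelaySolution (-g) φ x) (hg : HalfLineFeedback g C c m)
    (hz : IsCrossing x z) {t b : ℝ} (ht : 0 ≤ t) (hzt : z - 1 ≤ t) (hb : 0 < b) (hbx : b ≤ x t) :
    delayedDrop C c m b ≤ -x (z + 1) := by
  have hC := hg.bound_pos
  have hτz : t + b / (2 * C) ≤ z := by
    refine (hz.lt_of_pos ?_).le
    linarith [hx.half_le_of_mem_Icc hg ht hbx
      (right_mem_Icc.2 (show t ≤ t + b / (2 * C) by linarith [show 0 < b / (2 * C) by positivity]))]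
  have := hx.delayedDrop_le_sub hg ht hb hbx hz.pos.le (by linarith) (s := z + 1) (by linarith)
  rwa [hz.apply_eq_zero, zero_sub] at this

/-- The three entries of the minimum are for a crossing that comes early, late, or in between. -/
theorem exists_min_le_before_crossing (hx : IsDelaySolution (-g) φ x)
    (hg : HalfLineFeedback g C c m) (hz : IsCrossing x z) {ε : ℝ} (hε : 0 < ε) (hεx : ε ≤ x 0) :
    ∃ t, 0 ≤ t ∧ z - 1 ≤ t ∧ min (ε / 2) (min m (delayedDrop C c m ε)) ≤ x t := by
  have hC := hg.bound_pos
  have half_le : ∀ u, 0 ≤ u → u ≤ ε / (2 * C) → ε / 2 ≤ x u := fun u hu0 hu =>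
    hx.half_le_of_mem_Icc hg le_rfl hεx ⟨hu0, by rwa [zero_add]⟩
  rcases le_total z 1 with hz1 | hz1
  · exact ⟨0, le_rfl, by linarith, (min_le_left _ _).trans (by linarith)⟩
  refine ⟨z - 1, by linarith, le_rfl, ?_⟩
  have hpos : 0 < x (z - 1) := hz.pos_left _ ⟨min_le_right _ _, by linarith⟩
  rcases le_total 2 z with hz2 | hz2
  · refine (min_le_right _ _).trans ((min_le_left _ _).trans ?_)
    have := hx.level_le_sub_of_nonneg hg (s := z - 1) (by linarith) hpos
      (by rw [sub_add_cancel, hz.apply_eq_zero])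
    rwa [sub_add_cancel, hz.apply_eq_zero, sub_zero] at this
  · rcases le_total (z - 1) (ε / (2 * C)) with hzε | hzε
    · exact (min_le_left _ _).trans (half_le _ (by linarith) hzε)
    · refine (min_le_right _ _).trans ((min_le_right _ _).trans ?_)
      have hnonneg := hz.nonneg_of_le (t := 1 + ε / (2 * C)) (by positivity) (by linarith)
      linarith [hx.delayedDrop_le_sub hg le_rfl hε hεx (r := z - 1) (s := 1 + ε / (2 * C))
        (by linarith) (by linarith) (by rw [zero_add])]

end IsDelaySolution

theorem exists_le_halfReturn_zero (hg : HalfLineFeedback g C c m) {ε : ℝ} (hε : 0 < ε) :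
    ∃ κ, 0 < κ ∧ ∀ φ, AdmissibleHistory φ → ε ≤ φ 0 → κ ≤ halfReturn g φ 0 := by
  have hb : 0 < min (ε / 2) (min m (delayedDrop C c m ε)) :=
    lt_min (half_pos hε) (lt_min hg.pos_level (delayedDrop_pos hg hε))
  refine ⟨_, delayedDrop_pos hg hb, fun φ hφ hεφ => ?_⟩
  have hx := isDelaySolution_halfWave hg hφ
  have hz := isCrossing_halfWaveZero hg hφ
  obtain ⟨t, ht, hzt, hbt⟩ :=
    hx.exists_min_le_before_crossing hg hz hε (hεφ.trans (hx.eq_history 0 le_rfl).ge)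
  rw [halfReturn_apply_zero hg hφ]
  exact hx.delayedDrop_le_neg hg hz ht hzt hb hbt

theorem tendsto_halfWaveZero {ι : Type*} {l : Filter ι} {Φ : ι → ℝ → ℝ}
    (hg : HalfLineFeedback g C c m) (hΦ : ∀ i, AdmissibleHistory (Φ i))
    (hφ : AdmissibleHistory φ) (hlim : TendstoUniformly Φ φ l) :
    Tendsto (fun i => halfWaveZero g (Φ i)) l (nhds (halfWaveZero g φ)) :=
  (isCrossing_halfWaveZero hg hφ).tendsto (fun i => isCrossing_halfWaveZero hg (hΦ i)) fun t => by
    obtain ⟨N, hN⟩ := exists_nat_ge t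
    exact (IsDelaySolution.tendstoUniformlyOn_Iic hg.uniformContinuous.neg
      (fun i => isDelaySolution_halfWave hg (hΦ i)) (isDelaySolution_halfWave hg hφ) hlim
      N).tendsto_at hN

theorem tendstoUniformly_halfReturn {ι : Type*} {l : Filter ι} {Φ : ι → ℝ → ℝ}
    (hg : HalfLineFeedback g C c m) (hΦ : ∀ i, AdmissibleHistory (Φ i))
    (hφ : AdmissibleHistory φ) (hlim : TendstoUniformly Φ φ l) :
    TendstoUniformly (fun i => halfReturn g (Φ i)) (halfReturn g φ) l := by
  have hC := hg.bound_pos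
  have hx := isDelaySolution_halfWave hg hφ
  have hz0 := (isCrossing_halfWaveZero hg hφ).pos
  obtain ⟨N, hN⟩ := exists_nat_gt (halfWaveZero g φ + 1)
  have hZ := tendsto_halfWaveZero hg hΦ hφ hlim
  have hX := IsDelaySolution.tendstoUniformlyOn_Iic hg.uniformContinuous.neg
    (fun i => isDelaySolution_halfWave hg (hΦ i)) hx hlim N
  rw [Metric.tendstoUniformly_iff]
  intro ε hε
  filter_upwards [Metric.tendsto_nhds.1 hZ (ε / (2 * C)) (by positivity),
    hZ.eventually_lt_const (show halfWaveZero g φ < N - 1 by linarith),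
    Metric.tendstoUniformlyOn_iff.1 hX (ε / 2) (half_pos hε)] with i hZi hZN hXi
  have dist_lt : ∀ s ∈ Icc (-1 : ℝ) 0, dist (halfReturn g φ s) (halfReturn g (Φ i) s) < ε := by
    intro s hs
    have hZ0 := (isCrossing_halfWaveZero hg (hΦ i)).pos
    rw [halfReturn_apply hg hφ hs.1, halfReturn_apply hg (hΦ i) hs.1, dist_neg_neg]
    calc
      _ ≤ dist (halfWave g φ (halfWaveZero g φ + 1 + s))
            (halfWave g φ (halfWaveZero g (Φ i) + 1 + s))
          + dist (halfWave g φ (halfWaveZero g (Φ i) + 1 + s)) _ := dist_triangle _ _ _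
      _ < C * (ε / (2 * C)) + ε / 2 := by
        refine add_lt_add_of_le_of_lt ?_ (hXi _ (by rw [mem_Iic]; linarith [hs.2]))
        refine (hx.dist_le_mul hg (by linarith [hs.1]) (by linarith [hs.1])).trans ?_
        rw [dist_add_right, dist_add_right, dist_comm]
        exact mul_le_mul_of_nonneg_left hZi.le hC.le
      _ = ε := by field_simp; ring
  intro s
  rcases le_total s (-1) with hs | hs
  · rwa [halfReturn_of_le hg hφ hs, halfReturn_of_le hg (hΦ i) hs, dist_self]
  rcases le_total s 0 with hs' | hs'
  · exact dist_lt s ⟨hs, hs'⟩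
  · rw [halfReturn_of_nonneg hg hφ hs', halfReturn_of_nonneg hg (hΦ i) hs']
    exact dist_lt 0 ⟨by norm_num, le_rfl⟩

end HalfReturn

/-! ### The functional of an unstable characteristic root -/

section CharacteristicRoot

theorem exists_mul_exp_neg_cot_eq {α : ℝ} (hα : Real.pi / 2 < α) :
    ∃ ν ∈ Ioo (Real.pi / 2) Real.pi,
      ν * Real.exp (-(ν * Real.cos ν / Real.sin ν)) = α * Real.sin ν := by
  have hpi := Real.pi_gt_three
  have hα0 : 0 < α := by linarith
  set δ := Real.pi / (4 * α) with hδ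
  have hδ0 : 0 < δ := by positivity
  have hαδ : α * δ = Real.pi / 4 := by rw [hδ]; field_simp
  have hδ1 : δ < 1 / 2 := by nlinarith
  have hsin : ∀ ν ∈ Icc (Real.pi / 2) (Real.pi - δ), 0 < Real.sin ν := fun ν hν =>
    Real.sin_pos_of_pos_of_lt_pi (by linarith [hν.1]) (by linarith [hν.2])
  let F : ℝ → ℝ := fun ν => ν * Real.exp (-(ν * Real.cos ν / Real.sin ν)) - α * Real.sin ν
  have hF : ContinuousOn F (Icc (Real.pi / 2) (Real.pi - δ)) := by
    have hne : ∀ ν ∈ Icc (Real.pi / 2) (Real.pi - δ), Real.sin ν ≠ 0 := fun ν hν => (hsin ν hν).ne'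
    fun_prop (disch := assumption)
  have hleft : F (Real.pi / 2) < 0 := by
    simp only [F, Real.cos_pi_div_two, Real.sin_pi_div_two, mul_zero, zero_div, neg_zero,
      Real.exp_zero, mul_one]
    linarith
  have hright : 0 ≤ F (Real.pi - δ) := by
    have sin_le : Real.sin (Real.pi - δ) ≤ δ := by
      rw [Real.sin_pi_sub]
      exact Real.sin_le hδ0.le
    have cos_nonpos : Real.cos (Real.pi - δ) ≤ 0 :=
      Real.cos_nonpos_of_pi_div_two_le_of_le (by linarith) (by linarith)
    have one_le_exp :
        1 ≤ Real.exp (-((Real.pi - δ) * Real.cos (Real.pi - δ) / Real.sin (Real.pi - δ))) :=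
      Real.one_le_exp (neg_nonneg.2 (div_nonpos_of_nonpos_of_nonneg
        (mul_nonpos_of_nonneg_of_nonpos (by linarith) cos_nonpos)
        (hsin _ ⟨by linarith, le_rfl⟩).le))
    have mul_sin_le : α * Real.sin (Real.pi - δ) ≤ α * δ :=
      mul_le_mul_of_nonneg_left sin_le hα0.le
    simp only [F]
    nlinarith
  obtain ⟨ν, hν, hν0⟩ := intermediate_value_Icc (by linarith) hF ⟨hleft.le, hright⟩
  refine ⟨ν, ⟨hν.1.lt_of_ne ?_, by linarith [hν.2]⟩, sub_eq_zero.1 hν0⟩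
  rintro rfl
  exact hleft.ne hν0

theorem exists_characteristic_root {α : ℝ} (hα : Real.pi / 2 < α) :
    ∃ l : ℂ, -l = α * Complex.exp (-l) ∧ 0 < l.re ∧ l.im ∈ Ioo 0 Real.pi := by
  obtain ⟨ν, ⟨hν, hνpi⟩, hν_eq⟩ := exists_mul_exp_neg_cot_eq hα
  have hν0 : 0 < ν := Real.pi_div_two_pos.trans hν
  have hsin : 0 < Real.sin ν := Real.sin_pos_of_pos_of_lt_pi hν0 hνpi
  have hcos : Real.cos ν < 0 := Real.cos_neg_of_pi_div_two_lt_of_lt hν (by linarith)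
  obtain ⟨μ, hμ⟩ : ∃ μ, μ = -(ν * Real.cos ν / Real.sin ν) := ⟨_, rfl⟩
  rw [← hμ] at hν_eq
  have im_eq : ν = α * Real.sin ν * Real.exp (-μ) := by
    rw [Real.exp_neg, ← div_eq_mul_inv, eq_div_iff (Real.exp_pos μ).ne', hν_eq]
  have re_eq : -μ = α * Real.cos ν * Real.exp (-μ) := calc
    -μ = ν * (Real.cos ν / Real.sin ν) := by rw [hμ]; ring
    _ = α * Real.sin ν * Real.exp (-μ) * (Real.cos ν / Real.sin ν) := by rw [← im_eq]
    _ = α * Real.cos ν * Real.exp (-μ) := by field_simp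
  refine ⟨⟨μ, ν⟩, Complex.ext ?_ ?_, ?_, hν0, hνpi⟩
  · simp [Complex.exp_re]
    linarith
  · simp [Complex.exp_im]
    linarith
  · rw [hμ]
    exact neg_pos.2 (div_neg_of_neg_of_pos (mul_neg_of_pos_of_neg hν0 hcos) hsin)

/-- The linear functional attached to a characteristic root `l` of the linearisation at `0`; it
is the coordinate along the corresponding eigenfunction, up to normalisation. -/
noncomputable def charFunctional (l : ℂ) (φ : ℝ → ℝ) : ℂ :=
  φ 0 + l * ∫ s in (-1 : ℝ)..0, Complex.exp (-l * s) * φ s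

variable {l : ℂ} {φ x : ℝ → ℝ}

theorem charFunctional_congr {ψ : ℝ → ℝ} (h : EqOn φ ψ (Icc (-1) 0)) :
    charFunctional l φ = charFunctional l ψ := by
  unfold charFunctional
  rw [h (right_mem_Icc.2 (by norm_num))]
  congr 2
  refine intervalIntegral.integral_congr fun s hs => ?_
  rw [uIcc_of_le (by norm_num)] at hs
  simp only [h hs]

theorem charFunctional_smul (k : ℝ) (φ : ℝ → ℝ) :
    charFunctional l (k • φ) = k * charFunctional l φ := by
  simp only [charFunctional, Pi.smul_apply, smul_eq_mul, Complex.ofReal_mul,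
    mul_left_comm _ (k : ℂ), intervalIntegral.integral_const_mul, mul_add]

theorem charFunctional_neg (φ : ℝ → ℝ) : charFunctional l (-φ) = -charFunctional l φ := by
  simpa using charFunctional_smul (-1) φ

theorem hasDerivAt_exp_neg_mul (l : ℂ) (s : ℝ) :
    HasDerivAt (fun s : ℝ => Complex.exp (-l * s)) (-l * Complex.exp (-l * s)) s := by
  have h : HasDerivAt (fun s : ℝ => -l * (s : ℂ)) (-l) s := by
    simpa using (Complex.ofRealCLM.hasDerivAt (x := s)).const_mul (-l)
  simpa [mul_comm] using h.cexp

section NoCancellation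

theorem charFunctional_eq_integral_deriv {q q' : ℝ → ℝ}
    (hq : ∀ s ∈ Icc (-1 : ℝ) 0, HasDerivAt q (q' s) s) (hqc : Continuous q)
    (hq' : Continuous q') (hq1 : q (-1) = 0) :
    charFunctional l q = ∫ s in (-1 : ℝ)..0, Complex.exp (-l * s) * q' s := by
  have hc : Continuous fun s : ℝ => l * (Complex.exp (-l * s) * q s) := by fun_prop
  have hc' : Continuous fun s : ℝ => Complex.exp (-l * s) * q' s := by fun_prop
  have integral_deriv :
      ∫ s in (-1 : ℝ)..0, (Complex.exp (-l * s) * q' s - l * (Complex.exp (-l * s) * q s)) =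
        Complex.exp (-l * (0 : ℝ)) * q 0 - Complex.exp (-l * (-1 : ℝ)) * q (-1) := by
    refine intervalIntegral.integral_eq_sub_of_hasDerivAt
      (f := fun s : ℝ => Complex.exp (-l * s) * (q s : ℂ)) (fun s hs => ?_)
      ((hc'.sub hc).intervalIntegrable _ _)
    rw [uIcc_of_le (by norm_num)] at hs
    exact ((hasDerivAt_exp_neg_mul l s).mul (hq s hs).ofReal_comp).congr_deriv (by ring)
  rw [intervalIntegral.integral_sub (hc'.intervalIntegrable _ _) (hc.intervalIntegrable _ _),
    intervalIntegral.integral_const_mul, hq1] at integral_deriv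
  simp only [Complex.ofReal_zero, mul_zero, Complex.exp_zero, one_mul, sub_zero] at integral_deriv
  rw [charFunctional, ← integral_deriv, sub_add_cancel]

/-- After rotation by `-im l / 2`, the argument of `e^{-ls}` stays within `im l / 2 < π / 2`. -/
theorem cos_half_im_le_re_exp (h0 : 0 < l.re) (h1 : l.im ∈ Ioo 0 Real.pi) {s : ℝ}
    (hs : s ∈ Icc (-1 : ℝ) 0) :
    Real.cos (l.im / 2) ≤
      (Complex.exp (((-(l.im / 2) : ℝ) : ℂ) * Complex.I) * Complex.exp (-l * s)).re := by
  obtain ⟨him0, himpi⟩ := h1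
  obtain ⟨hs1, hs0⟩ := hs
  have re_eq : (Complex.exp (((-(l.im / 2) : ℝ) : ℂ) * Complex.I) * Complex.exp (-l * s)).re =
      Real.exp (-l.re * s) * Real.cos (l.im / 2 + l.im * s) := by
    rw [← Complex.exp_add, Complex.exp_re, ← Real.cos_neg (l.im / 2 + _)]
    congr 2 <;> simp
    ring
  have cos_le : Real.cos (l.im / 2) ≤ Real.cos (l.im / 2 + l.im * s) := by
    rw [← Real.cos_abs (l.im / 2 + l.im * s)]
    refine Real.cos_le_cos_of_nonneg_of_le_pi (abs_nonneg _) (by linarith) (abs_le.2 ⟨?_, ?_⟩) <;>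
      nlinarith
  have cos_nonneg : 0 ≤ Real.cos (l.im / 2) :=
    Real.cos_nonneg_of_neg_pi_div_two_le_of_le (by linarith) (by linarith)
  have one_le_exp : 1 ≤ Real.exp (-l.re * s) := Real.one_le_exp (by nlinarith)
  rw [re_eq]
  exact cos_le.trans (le_mul_of_one_le_left (cos_nonneg.trans cos_le) one_le_exp)

theorem cos_half_im_mul_integral_le_norm (h0 : 0 < l.re) (h1 : l.im ∈ Ioo 0 Real.pi) {r : ℝ → ℝ}
    (hr : Continuous r) (hr0 : ∀ s, 0 ≤ r s) :
    Real.cos (l.im / 2) * ∫ s in (-1 : ℝ)..0, r s ≤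
      ‖∫ s in (-1 : ℝ)..0, Complex.exp (-l * s) * r s‖ := by
  set e : ℂ := Complex.exp (((-(l.im / 2) : ℝ) : ℂ) * Complex.I)
  have hc : Continuous fun s : ℝ => e * Complex.exp (-l * s) * r s := by fun_prop
  calc
    Real.cos (l.im / 2) * ∫ s in (-1 : ℝ)..0, r s
      = ∫ s in (-1 : ℝ)..0, Real.cos (l.im / 2) * r s :=
        (intervalIntegral.integral_const_mul _ _).symm
    _ ≤ ∫ s in (-1 : ℝ)..0, (e * Complex.exp (-l * s) * r s).re := by
        refine intervalIntegral.integral_mono_on (by norm_num)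
          ((hr.const_mul _).intervalIntegrable _ _)
          ((Complex.continuous_re.comp hc).intervalIntegrable _ _) fun s hs => ?_
        rw [Complex.re_mul_ofReal]
        exact mul_le_mul_of_nonneg_right (cos_half_im_le_re_exp h0 h1 hs) (hr0 s)
    _ = (∫ s in (-1 : ℝ)..0, e * Complex.exp (-l * s) * r s).re :=
        Complex.reCLM.intervalIntegral_comp_comm (hc.intervalIntegrable _ _)
    _ ≤ ‖∫ s in (-1 : ℝ)..0, e * Complex.exp (-l * s) * r s‖ := Complex.re_le_norm _
    _ = ‖∫ s in (-1 : ℝ)..0, Complex.exp (-l * s) * r s‖ := by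
        simp only [mul_assoc e, intervalIntegral.integral_const_mul, norm_mul]
        rw [Complex.norm_exp_ofReal_mul_I, one_mul]

theorem cos_half_im_mul_halfReturn_zero_le {g : ℝ → ℝ} {C c m : ℝ} (h0 : 0 < l.re)
    (h1 : l.im ∈ Ioo 0 Real.pi) (hg : HalfLineFeedback g C c m) (hφ : AdmissibleHistory φ) :
    Real.cos (l.im / 2) * halfReturn g φ 0 ≤ ‖charFunctional l (halfReturn g φ)‖ := by
  have hx := isDelaySolution_halfWave hg hφ
  have hz := isCrossing_halfWaveZero hg hφ
  set z := halfWaveZero g φ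
  let q : ℝ → ℝ := fun s => -halfWave g φ (z + 1 + s)
  let q' : ℝ → ℝ := fun s => g (halfWave g φ (z + 1 + s - 1))
  have hxc := hx.continuous
  have hgc := hg.continuous
  have hq' : Continuous q' := by fun_prop
  have hq1 : q (-1) = 0 := by simp [q, hz.apply_eq_zero]
  have hq : ∀ s ∈ Icc (-1 : ℝ) 0, HasDerivAt q (q' s) s := fun s hs => by
    have hd := (hx.hasDerivAt hgc.neg (t := z + 1 + s) (by linarith [hz.pos, hs.1])).neg
    simpa [q, q'] using hd.comp_const_add (z + 1) s
  have integral_eq : ∫ s in (-1 : ℝ)..0, q' s = q 0 := by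
    rw [intervalIntegral.integral_eq_sub_of_hasDerivAt
      (fun s hs => hq s (by rwa [uIcc_of_le (by norm_num)] at hs)) (hq'.intervalIntegrable _ _),
      hq1, sub_zero]
  have eqOn : EqOn (halfReturn g φ) q (Icc (-1) 0) := fun s hs => halfReturn_apply hg hφ hs.1
  rw [charFunctional_congr eqOn, eqOn (right_mem_Icc.2 (by norm_num)), ← integral_eq,
    charFunctional_eq_integral_deriv hq (by fun_prop) hq' hq1]
  exact cos_half_im_mul_integral_le_norm h0 h1 hq' fun s => hg.nonneg _

end NoCancellation

section Growth

theorem exp_neg_mul_charFunctional_translate (hx : Continuous x) (t : ℝ) :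
    Complex.exp (-l * t) * charFunctional l (fun s => x (t + s)) =
      Complex.exp (-l * t) * x t + l * ((∫ u in (0 : ℝ)..t, Complex.exp (-l * u) * x u) -
        ∫ u in (0 : ℝ)..(t - 1), Complex.exp (-l * u) * x u) := by
  have hc : Continuous fun u : ℝ => Complex.exp (-l * u) * x u := by fun_prop
  have integral_shift := intervalIntegral.integral_comp_add_left (a := -1) (b := 0)
    (fun u : ℝ => Complex.exp (-l * u) * x u) t
  have exp_add : ∀ s : ℝ, Complex.exp (-l * (t + s : ℝ)) =
      Complex.exp (-l * t) * Complex.exp (-l * s) := fun s => by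
    rw [← Complex.exp_add]
    push_cast
    ring_nf
  simp only [exp_add, mul_assoc, intervalIntegral.integral_const_mul, add_zero] at integral_shift
  rw [intervalIntegral.integral_interval_sub_left (hc.intervalIntegrable _ _)
    (hc.intervalIntegrable _ _), charFunctional, sub_eq_add_neg t 1, ← integral_shift, add_zero]
  ring

theorem continuous_exp_neg_mul_charFunctional_translate (hx : Continuous x) :
    Continuous fun t : ℝ => Complex.exp (-l * t) * charFunctional l (fun s => x (t + s)) := by
  have hc : Continuous fun u : ℝ => Complex.exp (-l * u) * x u := by fun_prop
  have : Continuous fun t : ℝ => ∫ u in (0 : ℝ)..t, Complex.exp (-l * u) * x u :=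
    intervalIntegral.continuous_primitive (fun a b => hc.intervalIntegrable a b) 0
  simp only [exp_neg_mul_charFunctional_translate hx]
  fun_prop

/-- For the linear equation `x'(t) = -α x (t - 1)` the derivative vanishes. -/
theorem hasDerivAt_exp_neg_mul_charFunctional_translate {α y t : ℝ}
    (hl : -l = α * Complex.exp (-l)) (hx : Continuous x) (hd : HasDerivAt x y t) :
    HasDerivAt (fun t : ℝ => Complex.exp (-l * t) * charFunctional l (fun s => x (t + s)))
      (Complex.exp (-l * t) * ((α * x (t - 1) + y : ℝ) : ℂ)) t := by
  have hc : Continuous fun u : ℝ => Complex.exp (-l * u) * x u := by fun_prop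
  have d_exp_mul := (hasDerivAt_exp_neg_mul l t).mul hd.ofReal_comp
  have d_primitive := fun t : ℝ => (hc.integral_hasStrictDerivAt 0 t).hasDerivAt
  have d_integral := ((d_primitive t).sub ((d_primitive (t - 1)).comp_sub_const t 1)).const_mul l
  simp only [exp_neg_mul_charFunctional_translate hx]
  refine (d_exp_mul.add d_integral).congr_deriv ?_
  have exp_shift : l * Complex.exp (-l * (t - 1 : ℝ)) = -(α * Complex.exp (-l * t)) := by
    have : Complex.exp (-l * (t - 1 : ℝ)) * Complex.exp (-l) = Complex.exp (-l * t) := by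
      rw [← Complex.exp_add]
      push_cast
      ring_nf
    rw [← this]
    linear_combination -Complex.exp (-l * (t - 1 : ℝ)) * hl
  push_cast at exp_shift ⊢
  linear_combination -x (t - 1) * exp_shift

theorem norm_sub_le_of_norm_deriv_le_exp {E : Type*} [NormedAddCommGroup E] [NormedSpace ℝ E]
    [CompleteSpace E] {w w' : ℝ → E} {K a b : ℝ} (ha : 0 < a) (hK : 0 ≤ K) (hb : 0 ≤ b)
    (hw : ContinuousOn w (Icc 0 b)) (hd : ∀ t ∈ Ioo 0 b, HasDerivAt w (w' t) t)
    (hw' : IntervalIntegrable w' MeasureTheory.volume 0 b)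
    (hbound : ∀ t ∈ Ioc 0 b, ‖w' t‖ ≤ K * Real.exp (-a * t)) : ‖w b - w 0‖ ≤ K / a := by
  have integral_exp : ∫ t in (0 : ℝ)..b, Real.exp (-a * t) = (1 - Real.exp (-a * b)) / a := by
    rw [intervalIntegral.integral_comp_mul_left Real.exp (neg_ne_zero.2 ha.ne'), integral_exp]
    simp only [mul_zero, Real.exp_zero, smul_eq_mul]
    field_simp
    ring
  have hc : Continuous fun t : ℝ => K * Real.exp (-a * t) := by fun_prop
  calc
    ‖w b - w 0‖ = ‖∫ t in (0 : ℝ)..b, w' t‖ := by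
      rw [intervalIntegral.integral_eq_sub_of_hasDerivAt_of_le hb hw hd hw']
    _ ≤ ∫ t in (0 : ℝ)..b, K * Real.exp (-a * t) :=
      intervalIntegral.norm_integral_le_of_norm_le hb (Eventually.of_forall hbound)
        (hc.intervalIntegrable _ _)
    _ = K * (1 - Real.exp (-a * b)) / a := by
      rw [intervalIntegral.integral_const_mul, integral_exp, mul_div_assoc]
    _ ≤ K / a := by
      gcongr
      exact mul_le_of_le_one_right hK (by linarith [Real.exp_pos (-a * b)])

variable {g : ℝ → ℝ} {α η C c m : ℝ}

theorem norm_exp_neg_mul_mul_charFunctional_translate_sub_le (hl : -l = α * Complex.exp (-l))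
    (h0 : 0 < l.re) (hg : HalfLineFeedback g C c m) (hφ : AdmissibleHistory φ)
    (hη : ∀ u ∈ Icc 0 (φ 0), |g u - α * u| ≤ η * u) {b : ℝ} (hb : 0 ≤ b)
    (hbz : b ≤ halfWaveZero g φ + 1) :
    ‖Complex.exp (-l * b) * charFunctional l (fun s => halfWave g φ (b + s)) -
      charFunctional l φ‖ ≤ η * φ 0 / l.re := by
  have hx := isDelaySolution_halfWave hg hφ
  have hz := isCrossing_halfWaveZero hg hφ
  have hxc := hx.continuous
  have hgc := hg.continuous
  set x := halfWave g φ
  have hη0 : 0 ≤ η := nonneg_of_mul_nonneg_left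
    ((abs_nonneg _).trans (hη (φ 0) (right_mem_Icc.2 hφ.pos.le))) hφ.pos
  let w' : ℝ → ℂ := fun t => Complex.exp (-l * t) * ((α * x (t - 1) + -g (x (t - 1)) : ℝ) : ℂ)
  have norm_w'_le : ∀ t ∈ Ioc 0 b, ‖w' t‖ ≤ η * φ 0 * Real.exp (-l.re * t) := by
    intro t ht
    have hxt : x (t - 1) ∈ Icc 0 (φ 0) :=
      ⟨hx.nonneg_of_le_crossing hφ hz (by linarith [ht.2]), hx.le_history_zero hg hφ _⟩
    have norm_exp : ‖Complex.exp (-l * t)‖ = Real.exp (-l.re * t) := by simp [Complex.norm_exp]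
    rw [norm_mul, norm_exp, Complex.norm_real, Real.norm_eq_abs, mul_comm, ← sub_eq_add_neg,
      abs_sub_comm]
    gcongr
    exact (hη _ hxt).trans (mul_le_mul_of_nonneg_left hxt.2 hη0)
  have history_eq : charFunctional l (fun s => x (0 + s)) = charFunctional l φ :=
    charFunctional_congr fun s hs => by rw [zero_add, hx.eq_history s hs.2]
  have norm_sub_le := norm_sub_le_of_norm_deriv_le_exp h0 (mul_nonneg hη0 hφ.pos.le) hb
    (continuous_exp_neg_mul_charFunctional_translate hxc).continuousOn
    (fun t ht => hasDerivAt_exp_neg_mul_charFunctional_translate hl hxc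
      (hx.hasDerivAt hgc.neg ht.1))
    ((by fun_prop : Continuous w').intervalIntegrable _ _) norm_w'_le
  simpa only [Complex.ofReal_zero, mul_zero, Complex.exp_zero, one_mul, history_eq]
    using norm_sub_le

/-- The elapsed time `z + 1 ≥ 1` produces the factor `e^{re l}`. -/
theorem exp_mul_sub_le_norm_charFunctional_halfReturn (hl : -l = α * Complex.exp (-l))
    (h0 : 0 < l.re) (hg : HalfLineFeedback g C c m) (hφ : AdmissibleHistory φ)
    (hη : ∀ u ∈ Icc 0 (φ 0), |g u - α * u| ≤ η * u) :
    Real.exp l.re * (‖charFunctional l φ‖ - η * φ 0 / l.re) ≤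
      ‖charFunctional l (halfReturn g φ)‖ := by
  have hz0 := (isCrossing_halfWaveZero hg hφ).pos
  have norm_sub_le := norm_exp_neg_mul_mul_charFunctional_translate_sub_le hl h0 hg hφ hη
    (b := halfWaveZero g φ + 1) (by linarith) le_rfl
  set b := halfWaveZero g φ + 1
  set ψ : ℝ → ℝ := fun s => halfWave g φ (b + s)
  have functional_eq : charFunctional l (halfReturn g φ) = -charFunctional l ψ := by
    rw [← charFunctional_neg]
    exact charFunctional_congr fun s hs => halfReturn_apply hg hφ hs.1
  have norm_exp : ‖Complex.exp (-l * b)‖ = Real.exp (-l.re * b) := by simp [Complex.norm_exp]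
  have le_mul_norm :
      ‖charFunctional l φ‖ - η * φ 0 / l.re ≤ Real.exp (-l.re * b) * ‖charFunctional l ψ‖ := by
    have := norm_sub_norm_le (charFunctional l φ) (Complex.exp (-l * b) * charFunctional l ψ)
    rw [norm_sub_rev, norm_mul, norm_exp] at this
    linarith
  rw [functional_eq, norm_neg]
  calc
    _ ≤ Real.exp l.re * (Real.exp (-l.re * b) * ‖charFunctional l ψ‖) := by gcongr
    _ = Real.exp (l.re + -l.re * b) * ‖charFunctional l ψ‖ := by rw [Real.exp_add, mul_assoc]
    _ ≤ ‖charFunctional l ψ‖ :=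
      mul_le_of_le_one_left (norm_nonneg _) (Real.exp_le_one_iff.2 (by nlinarith))

theorem norm_charFunctional_lt_halfReturn (hl : -l = α * Complex.exp (-l)) (h0 : 0 < l.re)
    (hg : HalfLineFeedback g C c m) (hφ : AdmissibleHistory φ) {κ : ℝ}
    (hκ : κ * φ 0 ≤ ‖charFunctional l φ‖)
    (hη : ∀ u ∈ Icc 0 (φ 0), |g u - α * u| ≤ η * u)
    (hηκ : Real.exp l.re * η < (Real.exp l.re - 1) * κ * l.re) :
    ‖charFunctional l φ‖ < ‖charFunctional l (halfReturn g φ)‖ := by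
  refine lt_of_lt_of_le ?_ (exp_mul_sub_le_norm_charFunctional_halfReturn hl h0 hg hφ hη)
  have one_lt_exp : 1 < Real.exp l.re := Real.one_lt_exp_iff.2 h0
  have loss_lt_gain : Real.exp l.re * (η * φ 0 / l.re) <
      (Real.exp l.re - 1) * ‖charFunctional l φ‖ := calc
    _ = Real.exp l.re * η * (φ 0 / l.re) := by ring
    _ < (Real.exp l.re - 1) * κ * l.re * (φ 0 / l.re) :=
      mul_lt_mul_of_pos_right hηκ (div_pos hφ.pos h0)
    _ = (Real.exp l.re - 1) * (κ * φ 0) := by field_simp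
    _ ≤ _ := mul_le_mul_of_nonneg_left hκ (by linarith)
  linarith

end Growth

end CharacteristicRoot

/-! ### The fixed point of the return map -/

section Histories

open scoped NNReal

/-- The interval `[-1, 0]` on which histories are prescribed. -/
abbrev HistoryInterval : Set ℝ := Icc (-1) 0

/-- The extension of a history from `[-1, 0]` to `ℝ`, constant on either side. -/
noncomputable def extendHistory (φ : HistoryInterval → ℝ) : ℝ → ℝ :=
  IccExtend (by norm_num : (-1 : ℝ) ≤ 0) φ

/-- The restriction of `ψ` to `[-1, 0]` as an element of the phase space `C([-1, 0], ℝ)`, with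
junk value `0` if `ψ` is not continuous there. -/
noncomputable def restrictHistory (ψ : ℝ → ℝ) : C(HistoryInterval, ℝ) :=
  ContinuousMap.mkD (fun s => ψ s) 0

/-- The histories of positive solutions: nondecreasing and `C`-Lipschitz on `[-1, 0]`, starting
from `0` and reaching at least `ε`. -/
structure IsLipschitzHistory (ε : ℝ) (C : ℝ≥0) (φ : HistoryInterval → ℝ) : Prop where
  extend_neg_one : extendHistory φ (-1) = 0
  monotone : Monotone φ
  le_extend_zero : ε ≤ extendHistory φ 0
  lipschitzWith : LipschitzWith C φ

/-- The set of `IsLipschitzHistory` histories in the phase space. -/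
def lipschitzHistories (ε : ℝ) (C : ℝ≥0) : Set C(HistoryInterval, ℝ) :=
  {φ | IsLipschitzHistory ε C φ}

/-- The admissible histories of amplitude at least `ε`. -/
def admissibleHistories (ε : ℝ) : Set (ℝ → ℝ) := {φ | AdmissibleHistory φ ∧ ε ≤ φ 0}

variable {ε κ : ℝ} {C : ℝ≥0} {ψ : ℝ → ℝ} {φ : HistoryInterval → ℝ}

theorem restrictHistory_apply (hψ : Continuous ψ) (s : HistoryInterval) :
    restrictHistory ψ s = ψ s :=
  ContinuousMap.mkD_apply_of_continuous (hψ.comp continuous_subtype_val)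

theorem restrictHistory_smul (hψ : Continuous ψ) (k : ℝ) :
    restrictHistory (k • ψ) = k • restrictHistory ψ := by
  ext s
  rw [restrictHistory_apply (hψ.const_smul k), ContinuousMap.smul_apply, restrictHistory_apply hψ,
    Pi.smul_apply]

theorem AdmissibleHistory.smul (hψ : AdmissibleHistory ψ) {k : ℝ} (hk : 0 < k) :
    AdmissibleHistory (k • ψ) where
  continuous := hψ.continuous.const_smul k
  monotone := hψ.monotone.const_mul hk.le
  eq_zero t ht := by rw [Pi.smul_apply, hψ.eq_zero t ht, smul_zero]
  eq_apply_zero t ht := by rw [Pi.smul_apply, hψ.eq_apply_zero t ht, Pi.smul_apply]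
  pos := mul_pos hk hψ.pos

theorem extendHistory_restrictHistory (hψ : AdmissibleHistory ψ) :
    extendHistory (restrictHistory ψ) = ψ := by
  funext t
  rw [extendHistory, IccExtend, Function.comp_apply, restrictHistory_apply hψ.continuous]
  rcases le_total t (-1) with ht | ht
  · rw [projIcc_of_le_left _ ht, hψ.eq_zero t ht, hψ.eq_zero _ le_rfl]
  · rcases le_total t 0 with ht' | ht'
    · rw [projIcc_of_mem _ ⟨ht, ht'⟩]
    · rw [projIcc_of_right_le _ ht', hψ.eq_apply_zero t ht']

namespace IsLipschitzHistory

theorem mem_Icc (h : IsLipschitzHistory ε C φ) (s : HistoryInterval) : φ s ∈ Icc 0 (C : ℝ) := by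
  have extend_neg_one := h.extend_neg_one
  rw [extendHistory, IccExtend_left] at extend_neg_one
  set a : HistoryInterval := ⟨-1, by norm_num⟩
  refine ⟨extend_neg_one ▸ h.monotone s.2.1, ?_⟩
  calc
    φ s ≤ φ a + C * dist s a := h.lipschitzWith.le_add_mul s a
    _ ≤ 0 + C * 1 := by
      gcongr
      · exact extend_neg_one.le
      · rw [Subtype.dist_eq, Real.dist_eq, abs_le]
        constructor <;> linarith [s.2.1, s.2.2]
    _ = C := by ring

theorem admissibleHistory_extendHistory (h : IsLipschitzHistory ε C φ) (hε : 0 < ε) :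
    AdmissibleHistory (extendHistory φ) where
  continuous := h.lipschitzWith.continuous.Icc_extend'
  monotone := h.monotone.IccExtend _
  eq_zero t ht := by
    rw [← h.extend_neg_one, extendHistory, IccExtend_of_le_left _ _ ht, IccExtend_left]
  eq_apply_zero t ht := by
    rw [extendHistory, IccExtend_of_right_le _ _ ht, IccExtend_right]
  pos := hε.trans_le h.le_extend_zero

theorem extendHistory_mem (h : IsLipschitzHistory ε C φ) (hε : 0 < ε) :
    extendHistory φ ∈ admissibleHistories ε :=
  ⟨h.admissibleHistory_extendHistory hε, h.le_extend_zero⟩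

end IsLipschitzHistory

theorem isLipschitzHistory_restrictHistory (hψ : AdmissibleHistory ψ) (hε : ε ≤ ψ 0)
    (hC : LipschitzWith C ψ) : IsLipschitzHistory ε C (restrictHistory ψ) where
  extend_neg_one := by rw [extendHistory_restrictHistory hψ, hψ.eq_zero _ le_rfl]
  monotone s t hst := by
    simpa only [restrictHistory_apply hψ.continuous] using hψ.monotone hst
  le_extend_zero := by rwa [extendHistory_restrictHistory hψ]
  lipschitzWith := by
    have restrict_eq : ⇑(restrictHistory ψ) = ψ ∘ (↑) :=
      funext (restrictHistory_apply hψ.continuous)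
    rw [restrict_eq, ← mul_one C]
    exact hC.comp (LipschitzWith.subtype_val _)

theorem isCompact_lipschitzHistories (ε : ℝ) (C : ℝ≥0) :
    IsCompact (lipschitzHistories ε C) := by
  have hclosed : IsClosed {φ : HistoryInterval → ℝ | IsLipschitzHistory ε C φ} := by
    have setOf_eq : {φ : HistoryInterval → ℝ | IsLipschitzHistory ε C φ} =
        {φ | extendHistory φ (-1) = 0} ∩ {φ | Monotone φ} ∩ {φ | ε ≤ extendHistory φ 0} ∩
          {φ | LipschitzWith C φ} :=
      ext fun φ => ⟨fun h => ⟨⟨⟨h.1, h.2⟩, h.3⟩, h.4⟩, fun h => ⟨h.1.1.1, h.1.1.2, h.1.2, h.2⟩⟩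
    rw [setOf_eq]
    exact (((isClosed_eq (continuous_apply _) continuous_const).inter isClosed_monotone).inter
      (isClosed_le continuous_const (continuous_apply _))).inter
        (isClosed_setOfPred_lipschitzWith C)
  have hcompact : IsCompact {φ : HistoryInterval → ℝ | IsLipschitzHistory ε C φ} :=
    (isCompact_univ_pi fun _ => isCompact_Icc).of_isClosed_subset hclosed
      fun φ hφ s _ => IsLipschitzHistory.mem_Icc hφ s
  refine ArzelaAscoli.isCompact_of_equicontinuous _ ?_
    (LipschitzWith.uniformEquicontinuous _ C fun φ => φ.2.lipschitzWith).equicontinuous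
  convert hcompact using 1
  ext φ
  exact ⟨fun ⟨_, hψ, hψφ⟩ => hψφ ▸ hψ, fun h => ⟨⟨φ, h.lipschitzWith.continuous⟩, h, rfl⟩⟩

theorem convex_lipschitzHistories (ε : ℝ) (C : ℝ≥0) :
    Convex ℝ (lipschitzHistories ε C) := by
  intro φ hφ ψ hψ a b ha hb hab
  have extend_eq : ∀ t, extendHistory (a • φ + b • ψ : C(HistoryInterval, ℝ)) t =
      a * extendHistory φ t + b * extendHistory ψ t := fun t => rfl
  refine ⟨?_, ?_, ?_, ?_⟩
  · rw [extend_eq, hφ.extend_neg_one, hψ.extend_neg_one, mul_zero, mul_zero, add_zero]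
  · exact (hφ.monotone.const_mul ha).add (hψ.monotone.const_mul hb)
  · calc
      ε = a * ε + b * ε := by rw [← add_mul, hab, one_mul]
      _ ≤ a * extendHistory φ 0 + b * extendHistory ψ 0 := by
        gcongr
        · exact hφ.le_extend_zero
        · exact hψ.le_extend_zero
  · have hsum : ‖a‖₊ * C + ‖b‖₊ * C = C := by
      rw [← add_mul]
      convert one_mul C
      ext
      simpa [abs_of_nonneg, ha, hb] using hab
    rw [← hsum]
    exact ((lipschitzWith_smul a).comp hφ.lipschitzWith).add
      ((lipschitzWith_smul b).comp hψ.lipschitzWith)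

variable {R : (ℝ → ℝ) → ℝ → ℝ}

theorem continuousOn_restrictHistory_comp_extendHistory (hε : 0 < ε)
    (hR : ∀ φ ∈ admissibleHistories ε, AdmissibleHistory (R φ))
    (hRc : ∀ l : Filter (admissibleHistories ε), ∀ φ ∈ admissibleHistories ε,
      TendstoUniformly (fun ψ : admissibleHistories ε => (ψ : ℝ → ℝ)) φ l →
        TendstoUniformly (fun ψ : admissibleHistories ε => R ψ) (R φ) l) :
    ContinuousOn (fun φ : C(HistoryInterval, ℝ) => restrictHistory (R (extendHistory φ)))
      (lipschitzHistories ε C) := by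
  rw [continuousOn_iff_continuous_domRestrict, continuous_iff_continuousAt]
  intro φ
  let extend : lipschitzHistories ε C → admissibleHistories ε :=
    fun ψ => ⟨extendHistory ψ, IsLipschitzHistory.extendHistory_mem ψ.2 hε⟩
  have tendsto_history : TendstoUniformly
      (fun (ψ : lipschitzHistories ε C) s => (ψ : C(HistoryInterval, ℝ)) s)
      (φ : C(HistoryInterval, ℝ)) (nhds φ) :=
    ContinuousMap.tendsto_iff_tendstoUniformly.1 continuousAt_subtype_val
  have tendsto_R := hRc (map extend (nhds φ)) _ (extend φ).2 (tendsto_history.comp _)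
  have apply_eq : ∀ ψ : lipschitzHistories ε C,
      ⇑(restrictHistory (R (extendHistory ψ))) = R (extendHistory ψ) ∘ (↑) := fun ψ =>
    funext (restrictHistory_apply (hR _ (extend ψ).2).continuous)
  refine ContinuousMap.tendsto_iff_tendstoUniformly.2 ?_
  simp only [domRestrict_apply, apply_eq]
  exact tendsto_R.comp _

theorem lipschitzHistories_nonempty (hε : 0 ≤ ε) (hεC : ε ≤ C) :
    (lipschitzHistories ε C).Nonempty := by
  let ramp : C(HistoryInterval, ℝ) := ⟨fun s => ε * (s + 1), by fun_prop⟩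
  have extend_eq : ∀ t (_ : t ∈ Icc (-1 : ℝ) 0), extendHistory ramp t = ε * (t + 1) :=
    fun t ht => IccExtend_of_mem _ _ ht
  refine ⟨ramp, ?_, ?_, ?_, ?_⟩
  · rw [extend_eq _ (by norm_num), neg_add_cancel, mul_zero]
  · exact fun s t hst => mul_le_mul_of_nonneg_left (add_le_add_left (Subtype.coe_le_coe.2 hst) 1) hε
  · rw [extend_eq 0 (by norm_num), zero_add, mul_one]
  · refine LipschitzWith.of_dist_le_mul fun s t => ?_
    calc
      |ε * (s + 1) - ε * (t + 1)| = ε * |(s : ℝ) - t| := by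
        rw [← mul_sub, abs_mul, abs_of_nonneg hε, add_sub_add_right_eq_sub]
      _ ≤ C * |(s : ℝ) - t| := mul_le_mul_of_nonneg_right hεC (abs_nonneg _)

/-- `ψ` scaled up to amplitude `ε` if its amplitude is smaller. -/
noncomputable def rescale (ε : ℝ) (ψ : ℝ → ℝ) : ℝ → ℝ := max 1 (ε / ψ 0) • ψ

theorem rescale_mem_admissibleHistories (hψ : AdmissibleHistory ψ) :
    rescale ε ψ ∈ admissibleHistories ε :=
  ⟨hψ.smul (one_pos.trans_le (le_max_left _ _)), (div_le_iff₀ hψ.pos).1 (le_max_right _ _)⟩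

theorem lipschitzWith_rescale (hε : 0 ≤ ε) (hκ : 0 < κ) (hψ : κ ≤ ψ 0) (hC : LipschitzWith C ψ) :
    LipschitzWith ((max 1 (ε / κ)).toNNReal * C) (rescale ε ψ) := by
  refine ((lipschitzWith_smul (max 1 (ε / ψ 0))).comp hC).weaken (mul_le_mul_left ?_ C)
  rw [← norm_toNNReal, Real.norm_of_nonneg (zero_le_one.trans (le_max_left _ _))]
  exact Real.toNNReal_le_toNNReal (max_le_max_left 1 (div_le_div_of_nonneg_left hε hκ hψ))

theorem continuousOn_restrictHistory_rescale (hε : 0 < ε)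
    (hR : ∀ φ ∈ admissibleHistories ε, AdmissibleHistory (R φ))
    (hRc : ∀ l : Filter (admissibleHistories ε), ∀ φ ∈ admissibleHistories ε,
      TendstoUniformly (fun ψ : admissibleHistories ε => (ψ : ℝ → ℝ)) φ l →
        TendstoUniformly (fun ψ : admissibleHistories ε => R ψ) (R φ) l) :
    ContinuousOn
      (fun φ : C(HistoryInterval, ℝ) => restrictHistory (rescale ε (R (extendHistory φ))))
      (lipschitzHistories ε C) := by
  have hRφ : ∀ φ ∈ lipschitzHistories ε C, AdmissibleHistory (R (extendHistory φ)) := fun φ hφ =>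
    hR _ (IsLipschitzHistory.extendHistory_mem hφ hε)
  have continuousOn_R :=
    continuousOn_restrictHistory_comp_extendHistory (C := C) hε hR hRc
  have continuous_extend_zero : Continuous fun φ : C(HistoryInterval, ℝ) => extendHistory φ 0 :=
    continuous_eval_const (projIcc (-1 : ℝ) 0 (by norm_num) 0)
  have continuousOn_R_zero : ContinuousOn
      (fun φ : C(HistoryInterval, ℝ) => R (extendHistory φ) 0) (lipschitzHistories ε C) :=
    (continuous_extend_zero.comp_continuousOn continuousOn_R).congr fun φ hφ =>
      (congrFun (extendHistory_restrictHistory (hRφ φ hφ)) 0).symm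
  have continuousOn_factor : ContinuousOn
      (fun φ : C(HistoryInterval, ℝ) => max 1 (ε / R (extendHistory φ) 0))
      (lipschitzHistories ε C) :=
    continuousOn_const.sup
      (continuousOn_const.div continuousOn_R_zero fun φ hφ => (hRφ φ hφ).pos.ne')
  exact (continuousOn_factor.smul continuousOn_R).congr fun φ hφ =>
    restrictHistory_smul (hRφ φ hφ).continuous _

theorem exists_rescale_eq_self (hε : 0 < ε) (hκ : 0 < κ)
    (hR : MapsTo R (admissibleHistories ε) (admissibleHistories κ))
    (hRC : ∀ φ ∈ admissibleHistories ε, LipschitzWith C (R φ))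
    (hRc : ∀ l : Filter (admissibleHistories ε), ∀ φ ∈ admissibleHistories ε,
      TendstoUniformly (fun ψ : admissibleHistories ε => (ψ : ℝ → ℝ)) φ l →
        TendstoUniformly (fun ψ : admissibleHistories ε => R ψ) (R φ) l) :
    ∃ φ, AdmissibleHistory φ ∧ rescale ε (R φ) = φ := by
  let D : ℝ≥0 := max ε.toNNReal ((max 1 (ε / κ)).toNNReal * C)
  have hεD : ε ≤ D := (Real.le_coe_toNNReal ε).trans (NNReal.coe_le_coe.2 (le_max_left _ _))
  have hRφ : ∀ φ ∈ lipschitzHistories ε D, R (extendHistory φ) ∈ admissibleHistories κ :=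
    fun φ hφ => hR (IsLipschitzHistory.extendHistory_mem hφ hε)
  have mapsTo : MapsTo
      (fun φ : C(HistoryInterval, ℝ) => restrictHistory (rescale ε (R (extendHistory φ))))
      (lipschitzHistories ε D) (lipschitzHistories ε D) := fun φ hφ => by
    obtain ⟨hadm, hle⟩ := rescale_mem_admissibleHistories (ε := ε) (hRφ φ hφ).1
    exact isLipschitzHistory_restrictHistory hadm hle ((lipschitzWith_rescale hε.le hκ (hRφ φ hφ).2
      (hRC _ (IsLipschitzHistory.extendHistory_mem hφ hε))).weaken (le_max_right _ _))
  obtain ⟨φ, hφ, hfix⟩ := exists_isFixedPt_of_isCompact_of_convex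
    (isCompact_lipschitzHistories ε D) (convex_lipschitzHistories ε D)
    (lipschitzHistories_nonempty hε.le hεD)
    (continuousOn_restrictHistory_rescale hε (fun φ hφ => (hR hφ).1) hRc) mapsTo
  refine ⟨extendHistory φ, IsLipschitzHistory.admissibleHistory_extendHistory hφ hε, ?_⟩
  rw [← extendHistory_restrictHistory (rescale_mem_admissibleHistories (hRφ φ hφ).1).1]
  exact congrArg (fun φ : C(HistoryInterval, ℝ) => extendHistory φ) hfix

end Histories

section ReturnMap

theorem exists_abs_sub_mul_le_of_hasDerivWithinAt {g : ℝ → ℝ} {α η : ℝ} (h0 : g 0 = 0)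
    (hd : HasDerivWithinAt g α (Ici 0) 0) (hη : 0 < η) :
    ∃ r, 0 < r ∧ ∀ u ∈ Icc 0 r, |g u - α * u| ≤ η * u := by
  have eventually_le : ∀ᶠ u in nhdsWithin 0 (Ici 0), |g u - α * u| ≤ η * u := by
    filter_upwards [(hasDerivWithinAt_iff_isLittleO.1 hd).def hη, self_mem_nhdsWithin] with u hu hu0
    simpa only [sub_zero, h0, smul_eq_mul, Real.norm_eq_abs, abs_of_nonneg (mem_Ici.1 hu0),
      mul_comm u α] using hu
  obtain ⟨r, hr, hsub⟩ := mem_nhdsGE_iff_exists_Icc_subset.1 eventually_le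
  exact ⟨r, hr, hsub⟩

variable {g₁ g₂ : ℝ → ℝ} {C₁ c₁ m₁ C₂ c₂ m₂ α : ℝ}

theorem exists_norm_charFunctional_lt_of_apply_zero_le {l : ℂ} (hl : -l = α * Complex.exp (-l))
    (h0 : 0 < l.re) (h1 : l.im ∈ Ioo 0 Real.pi) (hα : 0 < α) (hg₁ : HalfLineFeedback g₁ C₁ c₁ m₁)
    (hg₂ : HalfLineFeedback g₂ C₂ c₂ m₂) (hd₁ : HasDerivWithinAt g₁ α (Ici 0) 0)
    (hd₂ : HasDerivWithinAt g₂ α (Ici 0) 0) :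
    ∃ ε, 0 < ε ∧ ∀ φ, AdmissibleHistory φ → φ 0 ≤ ε →
      Real.cos (l.im / 2) * φ 0 ≤ ‖charFunctional l φ‖ →
        ‖charFunctional l φ‖ < ‖charFunctional l (halfReturn g₂ (halfReturn g₁ φ))‖ := by
  have cos_pos : 0 < Real.cos (l.im / 2) :=
    Real.cos_pos_of_mem_Ioo ⟨by linarith [h1.1, Real.pi_pos], by linarith [h1.2]⟩
  have one_lt_exp : 1 < Real.exp l.re := Real.one_lt_exp_iff.2 h0
  obtain ⟨η, hη, hη_lt⟩ : ∃ η, 0 < η ∧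
      Real.exp l.re * η < (Real.exp l.re - 1) * Real.cos (l.im / 2) * l.re := by
    have gain_pos : 0 < (Real.exp l.re - 1) * Real.cos (l.im / 2) * l.re :=
      mul_pos (mul_pos (sub_pos.2 one_lt_exp) cos_pos) h0
    obtain ⟨η, hη, hη_lt⟩ := exists_between (div_pos gain_pos (Real.exp_pos l.re))
    exact ⟨η, hη, (lt_div_iff₀' (Real.exp_pos _)).1 hη_lt⟩
  obtain ⟨r₁, hr₁, approx₁⟩ :=
    exists_abs_sub_mul_le_of_hasDerivWithinAt (hg₁.eq_zero 0 le_rfl) hd₁ hη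
  obtain ⟨r₂, hr₂, approx₂⟩ :=
    exists_abs_sub_mul_le_of_hasDerivWithinAt (hg₂.eq_zero 0 le_rfl) hd₂ hη
  have hαη : 0 < α + η := add_pos hα hη
  refine ⟨min r₁ (r₂ / (α + η)), lt_min hr₁ (div_pos hr₂ hαη), fun φ hφ hφε hφκ => ?_⟩
  obtain ⟨hφ₁, hφ₂⟩ := le_min_iff.1 hφε
  have approx_φ : ∀ u ∈ Icc 0 (φ 0), |g₁ u - α * u| ≤ η * u := fun u hu =>
    approx₁ u ⟨hu.1, hu.2.trans hφ₁⟩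
  have halfReturn_zero_le_r₂ : halfReturn g₁ φ 0 ≤ r₂ :=
    (halfReturn_zero_le_mul hg₁ hφ hαη.le fun u hu => by
      linarith [(abs_le.1 (approx_φ u hu)).2]).trans ((le_div_iff₀' hαη).1 hφ₂)
  calc
    ‖charFunctional l φ‖ < ‖charFunctional l (halfReturn g₁ φ)‖ :=
      norm_charFunctional_lt_halfReturn hl h0 hg₁ hφ hφκ approx_φ hη_lt
    _ < _ := norm_charFunctional_lt_halfReturn hl h0 hg₂ (admissibleHistory_halfReturn hg₁ hφ)
      (cos_half_im_mul_halfReturn_zero_le h0 h1 hg₁ hφ)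
      (fun u hu => approx₂ u ⟨hu.1, hu.2.trans halfReturn_zero_le_r₂⟩) hη_lt

theorem exists_rescale_halfReturn_halfReturn_eq_self (hg₁ : HalfLineFeedback g₁ C₁ c₁ m₁)
    (hg₂ : HalfLineFeedback g₂ C₂ c₂ m₂) {ε : ℝ} (hε : 0 < ε) :
    ∃ φ, AdmissibleHistory φ ∧ rescale ε (halfReturn g₂ (halfReturn g₁ φ)) = φ := by
  obtain ⟨κ₁, hκ₁, le_halfReturn₁⟩ := exists_le_halfReturn_zero hg₁ hε
  obtain ⟨κ₂, hκ₂, le_halfReturn₂⟩ := exists_le_halfReturn_zero hg₂ hκ₁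
  have adm₁ : ∀ φ ∈ admissibleHistories ε, AdmissibleHistory (halfReturn g₁ φ) := fun φ hφ =>
    admissibleHistory_halfReturn hg₁ hφ.1
  exact exists_rescale_eq_self (R := fun φ => halfReturn g₂ (halfReturn g₁ φ)) hε hκ₂
    (fun φ hφ => ⟨admissibleHistory_halfReturn hg₂ (adm₁ φ hφ),
      le_halfReturn₂ _ (adm₁ φ hφ) (le_halfReturn₁ φ hφ.1 hφ.2)⟩)
    (fun φ hφ => lipschitzWith_halfReturn hg₂ (adm₁ φ hφ))
    fun l φ hφ hlim => tendstoUniformly_halfReturn hg₂ (fun ψ => adm₁ ψ ψ.2) (adm₁ φ hφ)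
      (tendstoUniformly_halfReturn hg₁ (fun ψ => ψ.2.1) hφ.1 hlim)

theorem exists_halfReturn_halfReturn_eq_self (hα : Real.pi / 2 < α)
    (hg₁ : HalfLineFeedback g₁ C₁ c₁ m₁) (hg₂ : HalfLineFeedback g₂ C₂ c₂ m₂)
    (hd₁ : HasDerivWithinAt g₁ α (Ici 0) 0) (hd₂ : HasDerivWithinAt g₂ α (Ici 0) 0) :
    ∃ φ, AdmissibleHistory φ ∧ halfReturn g₂ (halfReturn g₁ φ) = φ := by
  obtain ⟨l, hl, h0, h1⟩ := exists_characteristic_root hα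
  obtain ⟨ε, hε, norm_lt⟩ := exists_norm_charFunctional_lt_of_apply_zero_le hl h0 h1
    (Real.pi_div_two_pos.trans hα) hg₁ hg₂ hd₁ hd₂
  obtain ⟨φ, hφ, hfix⟩ := exists_rescale_halfReturn_halfReturn_eq_self hg₁ hg₂ hε
  have hq := admissibleHistory_halfReturn hg₁ hφ
  set ψ := halfReturn g₂ (halfReturn g₁ φ)
  have hψ : 0 < ψ 0 := (admissibleHistory_halfReturn hg₂ hq).pos
  rcases le_or_gt (ε / ψ 0) 1 with hle | hgt
  · exact ⟨φ, hφ, by rwa [rescale, max_eq_left hle, one_smul] at hfix⟩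
  exfalso
  rw [rescale, max_eq_right hgt.le] at hfix
  have hφε : φ 0 = ε := by
    rw [← hfix, Pi.smul_apply, smul_eq_mul, div_mul_cancel₀ _ hψ.ne']
  have norm_eq : ‖charFunctional l φ‖ = ε / ψ 0 * ‖charFunctional l ψ‖ := by
    rw [← hfix, charFunctional_smul, norm_mul, Complex.norm_real,
      Real.norm_of_nonneg (div_pos hε hψ).le]
  have cos_mul_le : Real.cos (l.im / 2) * φ 0 ≤ ‖charFunctional l φ‖ := calc
    _ = ε / ψ 0 * (Real.cos (l.im / 2) * ψ 0) := by rw [hφε]; field_simp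
    _ ≤ ε / ψ 0 * ‖charFunctional l ψ‖ := mul_le_mul_of_nonneg_left
      (cos_half_im_mul_halfReturn_zero_le h0 h1 hg₂ hq) (div_pos hε hψ).le
    _ = _ := norm_eq.symm
  refine (norm_lt φ hφ hφε.le cos_mul_le).not_ge ?_
  rw [norm_eq]
  exact le_mul_of_one_le_left (norm_nonneg _) hgt.le

end ReturnMap

/-! ### Closing up the half-waves -/

section Periodic

theorem exists_periodic_eqOn_Ici {β : Type*} {x : ℝ → β} {a T : ℝ} (hT : 0 < T)
    (hper : ∀ t, a ≤ t → x (t + T) = x t) :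
    ∃ p : ℝ → β, Function.Periodic p T ∧ EqOn p x (Ici a) := by
  have add_nsmul : ∀ n : ℕ, ∀ t, a ≤ t → x (t + n • T) = x t := by
    intro n
    induction n with
    | zero => simp
    | succ n ih =>
      intro t ht
      rw [succ_nsmul, ← add_assoc, hper _ (le_add_of_le_of_nonneg ht (nsmul_nonneg hT.le n)),
        ih t ht]
  refine ⟨fun t => x (toIcoMod hT a t), fun t => ?_, fun t ht => ?_⟩
  · simp only [toIcoMod_add_right]
  · obtain ⟨hmod, hmod_lt⟩ := toIcoMod_mem_Ico hT a t
    have decomp := toIcoMod_add_toIcoDiv_zsmul hT a t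
    have div_nonneg : 0 ≤ toIcoDiv hT a t := by
      by_contra! hneg
      have : toIcoDiv hT a t • T ≤ (-1 : ℤ) • T :=
        zsmul_le_zsmul_left hT.le (Int.le_sub_one_of_lt hneg)
      rw [neg_one_zsmul] at this
      linarith [mem_Ici.1 ht]
    lift toIcoDiv hT a t to ℕ using div_nonneg with n
    rw [natCast_zsmul] at decomp
    exact (add_nsmul n _ hmod).symm.trans (congrArg x decomp)

theorem hasDerivAt_of_periodic {f p : ℝ → ℝ} {T : ℝ} (hT : 0 < T) (hp : Function.Periodic p T)
    (hd : ∀ t, 0 < t → HasDerivAt p (f (p (t - 1))) t) (t : ℝ) :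
    HasDerivAt p (f (p (t - 1))) t := by
  obtain ⟨n, hn⟩ := exists_lt_nsmul hT (-t)
  have shifted := (hd (t + n • T) (by linarith)).comp_add_const t (n • T)
  rw [add_sub_right_comm, hp.nsmul n (t - 1)] at shifted
  exact shifted.congr_of_eventuallyEq (Eventually.of_forall fun s => (hp.nsmul n s).symm)

/-- `p` has period `T`, vanishes at `-1`, and over one period is positive on `(-1, z)` and negative
on `(z, T - 1)`, both of these intervals being longer than the delay. -/
structure IsSlowOscillation (p : ℝ → ℝ) (z T : ℝ) : Prop where
  periodic : Function.Periodic p T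
  pos : 0 < z
  add_two_lt : z + 2 < T
  apply_neg_one : p (-1) = 0
  apply_eq_zero : p z = 0
  apply_pos : ∀ t ∈ Ioo (-1) z, 0 < p t
  apply_neg : ∀ t ∈ Ioo z (T - 1), p t < 0

namespace IsSlowOscillation

variable {p : ℝ → ℝ} {z T : ℝ}

theorem period_pos (hp : IsSlowOscillation p z T) : 0 < T := by
  linarith [hp.pos, hp.add_two_lt]

theorem apply_period_sub_one (hp : IsSlowOscillation p z T) : p (T - 1) = 0 := by
  rw [sub_eq_neg_add, hp.periodic, hp.apply_neg_one]

theorem eq_of_apply_eq_zero (hp : IsSlowOscillation p z T) {t : ℝ} (ht : t ∈ Ioo (-1) (T - 1))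
    (h0 : p t = 0) : t = z := by
  rcases lt_trichotomy t z with h | h | h
  · exact absurd h0 (hp.apply_pos t ⟨ht.1, h⟩).ne'
  · exact h
  · exact absurd h0 (hp.apply_neg t ⟨h, ht.2⟩).ne

theorem one_lt_sub_of_apply_eq_zero (hp : IsSlowOscillation p z T) {s t : ℝ} (hs : p s = 0)
    (ht : p t = 0) (hst : s < t) : 1 < t - s := by
  obtain ⟨n, hn, -⟩ := existsUnique_sub_zsmul_mem_Ico hp.period_pos s (-1)
  rw [← hp.periodic.sub_zsmul_eq n] at hs ht
  rw [← sub_sub_sub_cancel_right t s (n • T)]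
  replace hst := sub_lt_sub_right hst (n • T)
  generalize s - n • T = s at *
  generalize t - n • T = t at *
  have hz := hp.pos
  have hT := hp.add_two_lt
  by_contra! hle
  rcases hn.1.eq_or_lt with rfl | h
  · exact (hp.apply_pos t ⟨hst, by linarith⟩).ne' ht
  · obtain rfl := hp.eq_of_apply_eq_zero ⟨h, by linarith [hn.2]⟩ hs
    exact (hp.apply_neg t ⟨hst, by linarith⟩).ne ht

theorem isSOP (hp : IsSlowOscillation p z T) {f : ℝ → ℝ}
    (hd : ∀ t, HasDerivAt p (f (p (t - 1))) t) : IsSOP f p := by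
  refine ⟨hd, ⟨T, hp.period_pos, hp.periodic⟩, ⟨0, -1, ?_⟩, fun s t hs ht hst => ?_⟩
  · rw [hp.apply_neg_one]
    exact (hp.apply_pos 0 ⟨by norm_num, hp.pos⟩).ne'
  · rcases hst.lt_or_gt with h | h
    · rw [abs_sub_comm]
      exact (hp.one_lt_sub_of_apply_eq_zero hs ht h).trans_le (le_abs_self _)
    · exact (hp.one_lt_sub_of_apply_eq_zero ht hs h).trans_le (le_abs_self _)

theorem minPeriod (hp : IsSlowOscillation p z T) : MinPeriod p T := by
  refine ⟨hp.period_pos, hp.periodic, fun T' hT'0 hT' => ?_⟩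
  by_contra! hlt
  have hz : -1 + T' = z := hp.eq_of_apply_eq_zero ⟨by linarith, by linarith⟩
    ((hT' (-1)).trans hp.apply_neg_one)
  have neg : p (0 + T') < 0 := hp.apply_neg _ ⟨by linarith, by linarith [hp.add_two_lt]⟩
  rw [hT'] at neg
  exact neg.not_gt (hp.apply_pos 0 ⟨by norm_num, hp.pos⟩)

end IsSlowOscillation

end Periodic

section Closing

variable {f g φ x : ℝ → ℝ} {C c m : ℝ}

theorem eqOn_halfWave (hg : HalfLineFeedback g C c m) (hφ : AdmissibleHistory φ)
    (hx : ∀ t, 0 ≤ t → x t = x 0 + ∫ s in (0 : ℝ)..t, f (x (s - 1)))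
    (hxφ : EqOn x φ (Icc (-1) 0)) (hfg : ∀ u ∈ Icc 0 (φ 0), f u = -g u) :
    EqOn x (halfWave g φ) (Icc (-1) (halfWaveZero g φ + 1)) := by
  have hw := isDelaySolution_halfWave hg hφ
  have hz := isCrossing_halfWaveZero hg hφ
  refine eqOn_of_eq_integral (h := f) (fun t ht => hx t ht.1) (fun t ht => ?_) fun t ht =>
    (hxφ ht).trans (hw.eq_history t ht.2).symm
  rw [hw.eq_integral t ht.1, hw.eq_history 0 le_rfl]
  refine congrArg (φ 0 + ·) (intervalIntegral.integral_congr fun s hs => ?_)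
  rw [uIcc_of_le ht.1] at hs
  exact (hfg _ ⟨hw.nonneg_of_le_crossing hφ hz (by linarith [hs.2, ht.2]),
    hw.le_history_zero hg hφ _⟩).symm

theorem exists_zero_eqOn_halfReturn (hg : HalfLineFeedback g C c m) (hφ : AdmissibleHistory φ)
    (hφ_pos : ∀ s, -1 < s → 0 < φ s)
    (hx : ∀ t, 0 ≤ t → x t = x 0 + ∫ s in (0 : ℝ)..t, f (x (s - 1)))
    (hxφ : EqOn x φ (Icc (-1) 0)) (hfg : ∀ u ∈ Icc 0 (φ 0), f u = -g u) :
    ∃ z, 0 < z ∧ x z = 0 ∧ (∀ t ∈ Ioo (-1) z, 0 < x t) ∧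
      EqOn (fun s => -x (z + 1 + s)) (halfReturn g φ) (Icc (-1) 0) := by
  have hxw := eqOn_halfWave hg hφ hx hxφ hfg
  have hz := isCrossing_halfWaveZero hg hφ
  have hz0 := hz.pos
  refine ⟨halfWaveZero g φ, hz0, ?_, fun t ht => ?_, fun s hs => ?_⟩
  · rw [hxw ⟨by linarith, by linarith⟩, hz.apply_eq_zero]
  · rcases le_total t 0 with ht0 | ht0
    · rw [hxφ ⟨ht.1.le, ht0⟩]
      exact hφ_pos t ht.1
    · rw [hxw ⟨ht.1.le, by linarith [ht.2]⟩]
      exact hz.pos_left t ⟨(min_le_left _ _).trans ht0, ht.2⟩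
  · rw [halfReturn_apply hg hφ hs.1]
    exact congrArg Neg.neg (hxw ⟨by linarith [hs.1], by linarith [hs.2]⟩)

theorem IsDelaySolution.eq_integral_add {h : ℝ → ℝ} (hx : IsDelaySolution h φ x)
    (hh : Continuous h) {a t : ℝ} (ha : 0 ≤ a) (ht : 0 ≤ t) :
    x (a + t) = x a + ∫ s in (0 : ℝ)..t, h (x (a + (s - 1))) := by
  have substitution := intervalIntegral.integral_comp_add_left (a := 0) (b := t)
    (fun s => h (x (s - 1))) a
  simp only [add_sub_assoc, add_zero] at substitution
  rw [substitution, ← sub_eq_iff_eq_add', hx.sub_eq_integral hh ha (add_nonneg ha ht)]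

theorem IsDelaySolution.apply_add_of_eqOn {h : ℝ → ℝ} (hx : IsDelaySolution h φ x)
    (hh : Continuous h) {T t : ℝ} (hT : 0 ≤ T) (hxT : EqOn (fun t => x (T + t)) x (Icc (-1) 0))
    (ht : -1 ≤ t) : x (t + T) = x t := by
  rw [add_comm]
  exact eqOn_of_eq_integral (A := t)
    (fun s hs => by simpa only [add_zero] using hx.eq_integral_add hh hT hs.1)
    (fun s hs => by simpa only [zero_add] using hx.eq_integral_add hh le_rfl hs.1) hxT ⟨ht, le_rfl⟩

variable {g₁ g₂ : ℝ → ℝ} {C₁ c₁ m₁ C₂ c₂ m₂ : ℝ}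

theorem exists_isSlowOscillation_of_halfReturn_halfReturn_eq (hf : Continuous f)
    (hg₁ : HalfLineFeedback g₁ C₁ c₁ m₁) (hg₂ : HalfLineFeedback g₂ C₂ c₂ m₂)
    (hφ : AdmissibleHistory φ) (hfix : halfReturn g₂ (halfReturn g₁ φ) = φ)
    (hfg₁ : ∀ u ∈ Icc 0 (φ 0), f u = -g₁ u)
    (hfg₂ : ∀ u ∈ Icc 0 (halfReturn g₁ φ 0), f (-u) = g₂ u) :
    ∃ p z T, IsSlowOscillation p z T ∧ (∀ t, HasDerivAt p (f (p (t - 1))) t) ∧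
      MonotoneOn p (Icc (-1) 0) := by
  have hq := admissibleHistory_halfReturn hg₁ hφ
  have hx := isDelaySolution_delaySolution hf hφ.continuous
  set x := delaySolution f φ
  have hx0 : EqOn x φ (Icc (-1) 0) := fun t ht => hx.eq_history t ht.2
  obtain ⟨z₁, hz₁, hxz₁, hx_pos, hxq⟩ := exists_zero_eqOn_halfReturn hg₁ hφ
    (fun s hs => hfix ▸ halfReturn_pos hg₂ hq hs)
    (fun t ht => by simpa only [zero_add] using hx.eq_integral_add hf le_rfl ht) hx0 hfg₁
  obtain ⟨z₂, hz₂, -, hx_neg, hxφ⟩ := exists_zero_eqOn_halfReturn (f := fun u => -f (-u)) hg₂ hq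
    (fun s hs => halfReturn_pos hg₁ hφ hs) (x := fun t => -x (z₁ + 1 + t)) (fun t ht => by
      simp only [neg_neg, add_zero, intervalIntegral.integral_neg]
      rw [hx.eq_integral_add hf (by linarith) ht, neg_add]) hxq
    fun u hu => congrArg Neg.neg (hfg₂ u hu)
  set T := z₁ + 1 + (z₂ + 1)
  have return_eq : EqOn (fun t => x (T + t)) x (Icc (-1) 0) := fun s hs => by
    calc
      x (T + s) = - -x (z₁ + 1 + (z₂ + 1 + s)) := by rw [neg_neg, ← add_assoc]
      _ = halfReturn g₂ (halfReturn g₁ φ) s := hxφ hs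
      _ = x s := by rw [hfix, hx0 hs]
  obtain ⟨p, hp, hpx⟩ := exists_periodic_eqOn_Ici (by positivity : 0 < T)
    fun _ ht => hx.apply_add_of_eqOn hf (by positivity) return_eq ht
  refine ⟨p, z₁, T, ⟨hp, hz₁, by linarith, ?_, ?_, fun t ht => ?_, fun t ht => ?_⟩,
    hasDerivAt_of_periodic (by positivity) hp fun t ht => ?_, fun s hs t ht hst => ?_⟩
  · rw [hpx self_mem_Ici, hx.eq_history _ (by norm_num), hφ.eq_zero _ le_rfl]
  · rw [hpx (mem_Ici.2 (by linarith)), hxz₁]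
  · rw [hpx ht.1.le]
    exact hx_pos t ht
  · rw [hpx (mem_Ici.2 (by linarith [ht.1]))]
    have := hx_neg (t - (z₁ + 1)) ⟨by linarith [ht.1], by linarith [ht.2]⟩
    rwa [add_sub_cancel, neg_pos] at this
  · rw [hpx (mem_Ici.2 (by linarith))]
    exact (hx.hasDerivAt hf ht).congr_of_eventuallyEq
      (hpx.eventuallyEq_of_mem (Ici_mem_nhds (by linarith)))
  · rw [hpx hs.1, hpx ht.1, hx0 hs, hx0 ht]
    exact hφ.monotone hst

end Closing

/-! ### Cutting off the feedback -/

section Clip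

/-- `h` frozen at its boundary values outside `[0, B]`. -/
def clip (B : ℝ) (h : ℝ → ℝ) (u : ℝ) : ℝ :=
  h (max 0 (min B u))

variable {h : ℝ → ℝ} {B α : ℝ}

theorem clip_of_mem {u : ℝ} (hu : u ∈ Icc 0 B) : clip B h u = h u := by
  rw [clip, min_eq_right hu.2, max_eq_right hu.1]

theorem clamp_mem_Icc (hB : 0 ≤ B) (u : ℝ) : max 0 (min B u) ∈ Icc 0 B :=
  ⟨le_max_left _ _, max_le hB (min_le_left _ _)⟩

theorem hasDerivWithinAt_clip (hB : 0 < B) (hd : HasDerivWithinAt h α (Ici 0) 0) :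
    HasDerivWithinAt (clip B h) α (Ici 0) 0 := by
  refine hd.congr_of_eventuallyEq_of_mem ?_ self_mem_Ici
  filter_upwards [Icc_mem_nhdsGE hB] with u hu
  exact clip_of_mem hu

theorem uniformContinuous_clip (hB : 0 ≤ B) (hc : ContinuousOn h (Icc 0 B)) :
    UniformContinuous (clip B h) := by
  have clamp : UniformContinuous fun u : ℝ => max 0 (min B u) :=
    ((LipschitzWith.id.const_min B).const_max 0).uniformContinuous
  have h_restrict : UniformContinuous ((Icc 0 B).domRestrict h) :=
    uniformContinuousOn_iff_restrict.1 (isCompact_Icc.uniformContinuousOn_of_continuous hc)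
  exact h_restrict.comp (clamp.subtype_mk (clamp_mem_Icc hB))

theorem exists_halfLineFeedback_clip {C : ℝ} (hB : 0 < B) (hc : ContinuousOn h (Icc 0 B))
    (h0 : h 0 = 0) (hpos : ∀ u ∈ Ioc 0 B, 0 < h u) (hα : 1 < α)
    (hd : HasDerivWithinAt h α (Ici 0) 0) (hC : ∀ u ∈ Icc 0 B, h u ≤ C) :
    ∃ c m, HalfLineFeedback (clip B h) C c m := by
  have clip_zero : ∀ u ≤ 0, clip B h u = 0 := fun u hu => by
    rw [clip, max_eq_left ((min_le_right _ _).trans hu), h0]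
  obtain ⟨r, hr, approx⟩ := exists_abs_sub_mul_le_of_hasDerivWithinAt (clip_zero 0 le_rfl)
    (hasDerivWithinAt_clip hB hd) (by linarith : 0 < (α - 1) / 2)
  have hrB : 0 < min B r := lt_min hB hr
  have hsub : Icc (min B r) B ⊆ Icc 0 B := Icc_subset_Icc_left hrB.le
  obtain ⟨y, hy, hmin⟩ :=
    isCompact_Icc.exists_isMinOn (nonempty_Icc.2 (min_le_left B r)) (hc.mono hsub)
  refine ⟨(1 + α) / 2, h y, uniformContinuous_clip hB.le hc, clip_zero, fun u hu => ?_,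
    fun u => hC _ (clamp_mem_Icc hB.le u), by linarith, hpos y ⟨hrB.trans_le hy.1, hy.2⟩⟩
  rcases le_total u r with hur | hur
  · refine (min_le_left _ _).trans ?_
    linarith [(abs_le.1 (approx u ⟨hu, hur⟩)).1]
  · exact (min_le_right _ _).trans
      (hmin ⟨le_max_of_le_right (min_le_min_left B hur), (clamp_mem_Icc hB.le u).2⟩)

end Clip

section NegativeFeedback

variable {f : ℝ → ℝ}

theorem apply_neg_of_pos (hneg : ∀ x, x ≠ 0 → x * f x < 0) {u : ℝ} (hu : 0 < u) : f u < 0 :=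
  (pos_iff_neg_of_mul_neg (hneg u hu.ne')).1 hu

theorem apply_pos_of_neg (hneg : ∀ x, x ≠ 0 → x * f x < 0) {u : ℝ} (hu : u < 0) : 0 < f u :=
  (neg_iff_pos_of_mul_neg (hneg u hu.ne)).1 hu

theorem apply_zero_eq_zero (hf : ContinuousAt f 0) (hneg : ∀ x, x ≠ 0 → x * f x < 0) : f 0 = 0 :=
  le_antisymm
    (le_of_tendsto (hf.mono_left nhdsWithin_le_nhds : Tendsto f (nhdsWithin 0 (Ioi 0)) _)
      (eventually_mem_nhdsWithin.mono fun _ hu => (apply_neg_of_pos hneg hu).le))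
    (ge_of_tendsto (hf.mono_left nhdsWithin_le_nhds : Tendsto f (nhdsWithin 0 (Iio 0)) _)
      (eventually_mem_nhdsWithin.mono fun _ hu => (apply_pos_of_neg hneg hu).le))

theorem exists_isSlowOscillation {M a : ℝ} (hf : Continuous f) (hneg : ∀ x, x ≠ 0 → x * f x < 0)
    (hbd : ∀ y, f y ≤ M) (hd : HasDerivAt f a 0) (ha : a < -(Real.pi / 2)) :
    ∃ p z T, IsSlowOscillation p z T ∧ (∀ t, HasDerivAt p (f (p (t - 1))) t) ∧
      MonotoneOn p (Icc (-1) 0) := by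
  have hf0 := apply_zero_eq_zero hf.continuousAt hneg
  have hα : 1 < -a := by linarith [Real.pi_gt_three]
  have hM : 0 < M := (apply_pos_of_neg hneg neg_one_lt_zero).trans_le (hbd _)
  obtain ⟨C, hC⟩ := isCompact_Icc.bddAbove_image (K := Icc 0 M) hf.neg.continuousOn
  replace hC : ∀ u ∈ Icc 0 M, -f u ≤ C := fun u hu => hC (mem_image_of_mem _ hu)
  have hC0 : 0 < C :=
    (neg_pos.2 (apply_neg_of_pos hneg hM)).trans_le (hC M (right_mem_Icc.2 hM.le))
  have hd₁ : HasDerivWithinAt (-f) (-a) (Ici 0) 0 := hd.neg.hasDerivWithinAt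
  have hd₂ : HasDerivWithinAt (fun u => f (-u)) (-a) (Ici 0) 0 := by
    rw [← neg_zero] at hd
    exact ((hd.comp (0 : ℝ) (hasDerivAt_neg 0)).congr_deriv (mul_neg_one a)).hasDerivWithinAt
  obtain ⟨c₁, m₁, hg₁⟩ := exists_halfLineFeedback_clip hM hf.neg.continuousOn
    (by rw [Pi.neg_apply, hf0, neg_zero]) (fun u hu => neg_pos.2 (apply_neg_of_pos hneg hu.1)) hα
    hd₁ hC
  obtain ⟨c₂, m₂, hg₂⟩ := exists_halfLineFeedback_clip (h := fun u => f (-u)) hC0 (by fun_prop)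
    (by simp only [hf0, neg_zero]) (fun u hu => apply_pos_of_neg hneg (neg_lt_zero.2 hu.1)) hα hd₂
    fun u _ => hbd _
  obtain ⟨φ, hφ, hfix⟩ := exists_halfReturn_halfReturn_eq_self (lt_neg_of_lt_neg ha) hg₁ hg₂
    (hasDerivWithinAt_clip hM hd₁) (hasDerivWithinAt_clip hC0 hd₂)
  have hq_le : halfReturn (clip M (-f)) φ 0 ≤ C :=
    halfReturn_zero_le hg₁ hφ fun u _ => hg₁.le_bound u
  have hφ_le : φ 0 ≤ M := hfix ▸ halfReturn_zero_le hg₂ (admissibleHistory_halfReturn hg₁ hφ)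
    fun u _ => hg₂.le_bound u
  refine exists_isSlowOscillation_of_halfReturn_halfReturn_eq hf hg₁ hg₂ hφ hfix
    (fun u hu => ?_) fun u hu => ?_
  · rw [clip_of_mem ⟨hu.1, hu.2.trans hφ_le⟩, Pi.neg_apply, neg_neg]
  · rw [clip_of_mem ⟨hu.1, hu.2.trans hq_le⟩]

end NegativeFeedback

theorem statement_2_general {f : ℝ → ℝ} {M a : ℝ} (hf : Continuous f)
    (hneg : ∀ x, x ≠ 0 → x * f x < 0) (hbd : ∀ y, f y ≤ M) (hd : HasDerivAt f a 0)
    (ha : a < -(Real.pi / 2)) :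
    ∃ p : ℝ → ℝ, IsSOP f p ∧ p (-1) = 0 ∧ MonotoneOn p (Icc (-1 : ℝ) 0) ∧
      ∃ z₁ z₂ : ℝ, 0 < z₁ ∧ z₁ < z₂ ∧ p z₁ = 0 ∧ p z₂ = 0 ∧
        (∀ t : ℝ, 0 < t → t ≤ z₂ → p t = 0 → t = z₁ ∨ t = z₂) ∧
        (∀ t : ℝ, p (t + (z₂ + 1)) = p t) ∧ MinPeriod p (z₂ + 1) := by
  obtain ⟨p, z, T, hp, hderiv, hmono⟩ := exists_isSlowOscillation hf hneg hbd hd ha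
  refine ⟨p, hp.isSOP hderiv, hp.apply_neg_one, hmono, z, T - 1, hp.pos,
    by linarith [hp.add_two_lt], hp.apply_eq_zero, hp.apply_period_sub_one,
    fun t ht0 htT ht => ?_, ?_, ?_⟩
  · exact htT.lt_or_eq.imp_left fun h => hp.eq_of_apply_eq_zero ⟨by linarith, h⟩ ht
  · rw [sub_add_cancel]
    exact hp.periodic
  · rw [sub_add_cancel]
    exact hp.minPeriod

theorem statement_2 (f : ℝ → ℝ) (M : ℝ) (hM : 0 < M)
    (hH : HypH f) (hbd : ∀ y : ℝ, f y ≤ M)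
    (hunstable : deriv f 0 < -(Real.pi / 2)) :
    ∃ p : ℝ → ℝ, IsSOP f p ∧ p (-1) = 0 ∧ MonotoneOn p (Icc (-1 : ℝ) 0) ∧
      ∃ z₁ z₂ : ℝ, 0 < z₁ ∧ z₁ < z₂ ∧ p z₁ = 0 ∧ p z₂ = 0 ∧
        (∀ t : ℝ, 0 < t → t ≤ z₂ → p t = 0 → t = z₁ ∨ t = z₂) ∧
        (∀ t : ℝ, p (t + (z₂ + 1)) = p t) ∧ MinPeriod p (z₂ + 1) :=
  statement_2_general hH.1 hH.2.1 hbd hH.2.2.1.self_of_nhds.hasDerivAt hunstable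
end
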